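/- arXiv:1707.05764 — 6 statements merged into one kernel-verified Lean document; each statement's English description precedes it below -/
import Mathlib

section
/- For every p ∈ (1,∞) and all d1, d2 ∈ ℤ, Dist_{W^{1/p,p}}(E_{d1}, E_{d2}) ≤ σ_p(d2 − d1); that is, for every f ∈ E_{d1} and every ε > 0 there exists g ∈ E_{d2} with |f − g|_{W^{1/p,p}}^p ≤ σ_p^p(d2 − d1) + ε. -/
open MeasureTheory Filter
open scoped ENNReal

noncomputable section

/-- Arc-length measure on the unit circle, realized as a measure on ℂ:
the pushforward of Lebesgue measure on `[0, 2π)` under `θ ↦ exp (θ i)`. -/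
def circleMeasure : Measure ℂ :=
  Measure.map (fun θ : ℝ => Complex.exp (θ * Complex.I))
    (volume.restrict (Set.Ico 0 (2 * Real.pi)))

/-- The unit circle `S¹ ⊆ ℂ`. -/
def unitCircle : Set ℂ := Metric.sphere (0 : ℂ) 1

/-- Gagliardo `p`-energy of `f` over a subset `A ⊆ S¹ × S¹`. -/
def gEnergyOn (p : ℝ) (f : ℂ → ℂ) (A : Set (ℂ × ℂ)) : ℝ≥0∞ :=
  ∫⁻ q in A, ENNReal.ofReal (‖f q.1 - f q.2‖ ^ p / ‖q.1 - q.2‖ ^ 2)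
    ∂(circleMeasure.prod circleMeasure)

/-- Total Gagliardo `p`-energy `|f|_{W^{1/p,p}}^p` (as an extended real). -/
def gEnergy (p : ℝ) (f : ℂ → ℂ) : ℝ≥0∞ := gEnergyOn p f Set.univ

/-- The Gagliardo seminorm `|f|_{W^{1/p,p}}`. -/
def gSeminorm (p : ℝ) (f : ℂ → ℂ) : ℝ := (gEnergy p f).toReal ^ (1 / p)

/-- A continuous map `g : S¹ → S¹` has (winding) degree `d`: it lifts to a
continuous `φ : [0, 2π] → ℝ` with `g (e^{iθ}) = e^{iφ(θ)}` and
`φ(2π) - φ(0) = 2πd`. -/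
def HasDegree (g : ℂ → ℂ) (d : ℤ) : Prop :=
  ContinuousOn g unitCircle ∧ (∀ z ∈ unitCircle, g z ∈ unitCircle) ∧
    ∃ φ : ℝ → ℝ, ContinuousOn φ (Set.Icc 0 (2 * Real.pi)) ∧
      (∀ θ ∈ Set.Icc 0 (2 * Real.pi),
        g (Complex.exp (θ * Complex.I)) = Complex.exp (φ θ * Complex.I)) ∧
      φ (2 * Real.pi) - φ 0 = 2 * Real.pi * d

/-- The class `𝓔_d ⊆ W^{1/p,p}(S¹;S¹)` of maps of (VMO-) degree `d`:
maps with values in `S¹` a.e., finite Gagliardo energy, approximable by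
continuous degree-`d` circle maps of finite energy both in `L^p` and in the
Gagliardo seminorm. -/
def classE (p : ℝ) (d : ℤ) : Set (ℂ → ℂ) :=
  {f | AEMeasurable f circleMeasure ∧ (∀ᵐ x ∂circleMeasure, ‖f x‖ = 1) ∧
    gEnergy p f ≠ ⊤ ∧
    ∃ g : ℕ → ℂ → ℂ,
      (∀ k, HasDegree (g k) d ∧ gEnergy p (g k) ≠ ⊤) ∧
      Tendsto (fun k => ∫ x, ‖f x - g k x‖ ^ p ∂circleMeasure) atTop (nhds 0) ∧
      Tendsto (fun k => gSeminorm p (fun x => f x - g k x)) atTop (nhds 0)}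

/-- `σ_p(d)`: the minimal `W^{1/p,p}`-seminorm in the class `𝓔_d`. -/
def sigmaP (p : ℝ) (d : ℤ) : ℝ := sInf (gSeminorm p '' classE p d)

/-- `Dist_{W^{1/p,p}}(𝓔_{d₁}, 𝓔_{d₂}) = sup_{f ∈ 𝓔_{d₁}} inf_{g ∈ 𝓔_{d₂}} |f - g|_{W^{1/p,p}}`. -/
def DistW (p : ℝ) (d1 d2 : ℤ) : ℝ :=
  sSup ((fun f => sInf ((fun g => gSeminorm p (fun x => f x - g x)) '' classE p d2))
    '' classE p d1)

end

/-- Cayley parametrization of the circle. -/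
noncomputable def cay (s : ℝ) : ℂ := Complex.exp (((Real.pi + 2 * Real.arctan s : ℝ) : ℂ) * Complex.I)

lemma cay_denom_ne (s : ℝ) : (s : ℂ) + Complex.I ≠ 0 := by
  intro h
  have := congrArg Complex.im h
  simp at this

lemma cay_eq (s : ℝ) : cay s = ((s : ℂ) - Complex.I) / ((s : ℂ) + Complex.I) := by
  have h1 : cay s = - (Complex.exp ((Real.arctan s : ℂ) * Complex.I)) ^ 2 := by
    unfold cay
    rw [← Complex.exp_nat_mul]
    push_cast
    rw [add_mul, Complex.exp_add, Complex.exp_pi_mul_I]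
    ring_nf
  have hpos : 0 < 1 + s ^ 2 := by positivity
  have hs : (((Real.sqrt (1 + s ^ 2) : ℝ) : ℂ)) ≠ 0 := by
    exact_mod_cast (Real.sqrt_pos.2 hpos).ne'
  have hsq : (((Real.sqrt (1 + s ^ 2) : ℝ) : ℂ)) ^ 2 = 1 + (s : ℂ) ^ 2 := by
    exact_mod_cast Real.sq_sqrt hpos.le
  have h2 : Complex.exp ((Real.arctan s : ℂ) * Complex.I)
      = (1 + s * Complex.I) / ((Real.sqrt (1 + s ^ 2) : ℝ) : ℂ) := by
    rw [Complex.exp_mul_I, ← Complex.ofReal_cos, ← Complex.ofReal_sin, Real.cos_arctan,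
      Real.sin_arctan]
    push_cast
    field_simp
  have hne : (1 + (s : ℂ) ^ 2) ≠ 0 := by exact_mod_cast hpos.ne'
  rw [h1, h2, div_pow, hsq, eq_div_iff (cay_denom_ne s)]
  field_simp
  linear_combination (-(s : ℂ) ^ 3 - (s : ℂ)^2 * Complex.I - 2 * s  ) * Complex.I_sq

lemma cay_norm (s : ℝ) : ‖cay s‖ = 1 := by
  unfold cay; exact Complex.norm_exp_ofReal_mul_I _

lemma cay_continuous : Continuous cay := by
  unfold cay
  have := Real.continuous_arctan
  fun_prop

lemma norm_s_add_I_sq (s : ℝ) : ‖(s : ℂ) + Complex.I‖ ^ 2 = 1 + s ^ 2 := by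
  rw [← Complex.normSq_eq_norm_sq, Complex.normSq_apply]; simp; ring

lemma cay_sub (s t : ℝ) : cay s - cay t
    = 2 * Complex.I * ((s - t : ℝ) : ℂ) / (((s : ℂ) + Complex.I) * ((t : ℂ) + Complex.I)) := by
  have h1 := cay_denom_ne s
  have h2 := cay_denom_ne t
  rw [cay_eq, cay_eq]
  field_simp
  push_cast
  ring

lemma cay_dist_sq (s t : ℝ) :
    ‖cay s - cay t‖ ^ 2 = 4 * (s - t) ^ 2 / ((1 + s ^ 2) * (1 + t ^ 2)) := by
  rw [cay_sub, norm_div, norm_mul, norm_mul, norm_mul, div_pow, mul_pow, mul_pow,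
    mul_pow (‖(s : ℂ) + Complex.I‖), norm_s_add_I_sq, norm_s_add_I_sq, Complex.norm_real]
  simp
  norm_num

lemma cay_injective : Function.Injective cay := by
  intro s t h
  have := cay_dist_sq s t
  rw [h, sub_self, norm_zero] at this
  have h1 : 0 < (1 + s ^ 2) * (1 + t ^ 2) := by positivity
  have h2 : (s - t) ^ 2 = 0 := by
    field_simp at this
    nlinarith
  nlinarith [pow_eq_zero_iff (two_ne_zero) |>.1 h2]

lemma cay_emb : MeasurableEmbedding cay :=
  cay_continuous.measurableEmbedding cay_injective

lemma circleMeasure_eq : circleMeasure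
    = Measure.map cay (volume.withDensity fun s : ℝ => ENNReal.ofReal (2 / (1 + s ^ 2))) := by
  set T : ℝ → ℝ := fun s => Real.pi + 2 * Real.arctan s with hT
  have hder : ∀ s, HasDerivAt T (2 / (1 + s ^ 2)) s := by
    intro s
    have := ((Real.hasDerivAt_arctan s).const_mul 2).const_add Real.pi
    simpa [hT, div_eq_mul_inv] using this
  have himg : T '' Set.univ = Set.Ioo 0 (2 * Real.pi) := by
    ext x
    constructor
    · rintro ⟨s, -, rfl⟩
      have h1 := Real.neg_pi_div_two_lt_arctan s
      have h2 := Real.arctan_lt_pi_div_two s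
      constructor <;> simp only [hT] <;> linarith
    · rintro ⟨h1, h2⟩
      refine ⟨Real.tan ((x - Real.pi) / 2), trivial, ?_⟩
      simp only [hT]
      rw [Real.arctan_tan (by linarith) (by linarith)]
      ring
  have hinj : Set.InjOn T Set.univ := by
    intro a _ b _ h
    simp only [hT] at h
    exact Real.arctan_injective (by linarith)
  have key := map_withDensity_abs_det_fderiv_eq_addHaar (μ := (volume : Measure ℝ)) (s := Set.univ)
    (f := T) (f' := fun s => ContinuousLinearMap.toSpanSingleton ℝ (2 / (1 + s ^ 2)))
    MeasurableSet.univ.nullMeasurableSet (fun x _ => (hder x).hasFDerivAt.hasFDerivWithinAt) hinj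
  rw [himg, Measure.restrict_univ] at key
  have hdet : (fun s : ℝ => ENNReal.ofReal
      |(ContinuousLinearMap.toSpanSingleton ℝ (2 / (1 + s ^ 2))).det|)
      = fun s : ℝ => ENNReal.ofReal (2 / (1 + s ^ 2)) := by
    funext s
    rw [ContinuousLinearMap.det_toSpanSingleton, abs_of_pos (by positivity)]
  rw [hdet] at key
  unfold circleMeasure
  rw [Measure.restrict_congr_set Ioo_ae_eq_Ico.symm, ← key, Measure.map_map]
  · rfl
  · fun_prop
  · have := Real.continuous_arctan
    fun_prop

instance : SFinite circleMeasure := by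
  unfold circleMeasure; infer_instance

instance : IsFiniteMeasure circleMeasure := by
  unfold circleMeasure; infer_instance

lemma gEnergy_line (p : ℝ) (f : ℂ → ℂ) : gEnergy p f
    = ∫⁻ q : ℝ × ℝ, ENNReal.ofReal (‖f (cay q.1) - f (cay q.2)‖ ^ p / (q.1 - q.2) ^ 2) := by
  have hmeas : Measurable fun s : ℝ => ENNReal.ofReal (2 / (1 + s ^ 2)) := by fun_prop
  unfold gEnergy gEnergyOn
  rw [Measure.restrict_univ, circleMeasure_eq, Measure.map_prod_map _ _ cay_emb.measurable
    cay_emb.measurable, (cay_emb.prodMap cay_emb).lintegral_map, prod_withDensity hmeas hmeas,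
    lintegral_withDensity_eq_lintegral_mul_non_measurable _ (by fun_prop)]
  · refine lintegral_congr fun q => ?_
    simp only [Pi.mul_apply, Prod.map]
    rw [← ENNReal.ofReal_mul (by positivity), ← ENNReal.ofReal_mul (by positivity), cay_dist_sq]
    congr 1
    have h1 : 1 + q.1 ^ 2 ≠ 0 := by positivity
    have h2 : 1 + q.2 ^ 2 ≠ 0 := by positivity
    by_cases h : q.1 - q.2 = 0
    · simp [h]
    · field_simp
      ring
  · filter_upwards with q
    exact ENNReal.mul_lt_top ENNReal.ofReal_lt_top ENNReal.ofReal_lt_top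

/-- Möbius maps of the disc. -/
noncomputable def mob (r : ℝ) (z : ℂ) : ℂ := (z + r) / (1 + r * z)

lemma mob_denom (r : ℝ) (h0 : 0 ≤ r) (h1 : r < 1) (z : ℂ) (hz : ‖z‖ = 1) :
    0 < (1 + r * z).re := by
  have := Complex.abs_re_le_norm z
  rw [hz] at this
  have := (abs_le.1 this).1
  simp
  nlinarith

lemma mob_cay (r : ℝ) (h0 : 0 ≤ r) (h1 : r < 1) (s : ℝ) :
    mob r (cay s) = cay ((1 + r) / (1 - r) * s) := by
  have h1' : (1 - r : ℂ) ≠ 0 := by exact_mod_cast (sub_pos.2 h1).ne'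
  have hd := mob_denom r h0 h1 (cay s) (cay_norm s)
  have hd' : 1 + r * cay s ≠ 0 := by intro h; rw [h] at hd; simp at hd
  have h3 := cay_denom_ne s
  have h4 := cay_denom_ne ((1 + r) / (1 - r) * s)
  unfold mob
  rw [div_eq_iff hd', cay_eq ((1 + r) / (1 - r) * s), cay_eq s]
  push_cast at h4 ⊢
  have h5 : ((1 + r) * s + Complex.I * (1 - r) : ℂ) ≠ 0 := by
    intro h
    apply h4
    field_simp
    linear_combination h
  have h6 : ((1 + r) * s + Complex.I * (1 - r) : ℂ) = (1 + r) * s + (1 - r) * Complex.I := by ring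
  have e1 : ((1 + r) / (1 - r) * s - Complex.I : ℂ) / ((1 + r) / (1 - r) * s + Complex.I)
     = ((1 + r) * s - Complex.I * (1 - r)) / ((1 + r) * s + Complex.I * (1 - r)) := by
    rw [div_eq_div_iff h4 h5]
    field_simp
  rw [e1, div_mul_eq_mul_div, eq_div_iff h5]
  field_simp
  ring

lemma gEnergy_mob (p : ℝ) (f : ℂ → ℂ) (r : ℝ) (h0 : 0 ≤ r) (h1 : r < 1) :
    gEnergy p (fun z => f (mob r z)) = gEnergy p f := by
  rw [gEnergy_line, gEnergy_line]
  set a := (1 + r) / (1 - r) with ha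
  have hapos : 0 < a := div_pos (by linarith) (by linarith)
  simp only [mob_cay r h0 h1, ← ha]
  have hemb : MeasurableEmbedding (fun s : ℝ => a * s) :=
    (Homeomorph.mulLeft₀ a hapos.ne').measurableEmbedding
  have hmap : Measure.map (Prod.map (fun s : ℝ => a * s) (fun s : ℝ => a * s))
      (volume : Measure (ℝ × ℝ)) = ENNReal.ofReal (a⁻¹ ^ 2) • (volume : Measure (ℝ × ℝ)) := by
    rw [Measure.volume_eq_prod, ← Measure.map_prod_map _ _ hemb.measurable hemb.measurable,
      Real.map_volume_mul_left hapos.ne', Measure.prod_smul_left, Measure.prod_smul_right, smul_smul,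
      abs_of_pos (inv_pos.2 hapos), ← ENNReal.ofReal_mul (inv_pos.2 hapos).le, sq]
  have h2 : ENNReal.ofReal (a ^ 2) * ENNReal.ofReal (a⁻¹ ^ 2) = 1 := by
    rw [← ENNReal.ofReal_mul (by positivity), ← mul_pow, mul_inv_cancel₀ hapos.ne']; simp
  have h3 : ∀ G : ℝ × ℝ → ℝ≥0∞, ∫⁻ q : ℝ × ℝ, G (a * q.1, a * q.2)
      = ENNReal.ofReal (a⁻¹ ^ 2) * ∫⁻ q, G q := by
    intro G
    rw [← smul_eq_mul, ← lintegral_smul_measure, ← hmap, (hemb.prodMap hemb).lintegral_map]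
    rfl
  have h4 := h3 (fun q => ENNReal.ofReal (a ^ 2) *
    ENNReal.ofReal (‖f (cay q.1) - f (cay q.2)‖ ^ p / (q.1 - q.2) ^ 2))
  rw [lintegral_const_mul' (ENNReal.ofReal (a ^ 2)) (fun q : ℝ × ℝ =>
    ENNReal.ofReal (‖f (cay q.1) - f (cay q.2)‖ ^ p / (q.1 - q.2) ^ 2)) ENNReal.ofReal_ne_top,
    ← mul_assoc, mul_comm (ENNReal.ofReal (a⁻¹ ^ 2)),
    h2, one_mul] at h4
  rw [← h4]
  refine lintegral_congr fun q => ?_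
  rw [← ENNReal.ofReal_mul (by positivity)]
  congr 1
  by_cases h : q.1 - q.2 = 0
  · simp [← mul_sub, h]
  · rw [← mul_sub]
    field_simp

/-- The weighted measure on pairs. -/
noncomputable def kap : Measure (ℂ × ℂ) :=
  (circleMeasure.prod circleMeasure).withDensity fun q => ENNReal.ofReal (1 / ‖q.1 - q.2‖ ^ 2)

/-- The extended-real valued seminorm. -/
noncomputable def NN (p : ℝ) (f : ℂ → ℂ) : ℝ≥0∞ :=
  eLpNorm (fun q : ℂ × ℂ => f q.1 - f q.2) (ENNReal.ofReal p) kap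

lemma kap_ac : kap ≪ circleMeasure.prod circleMeasure := withDensity_absolutelyContinuous _ _

lemma eLp_eq {p : ℝ} (hp : 1 < p) (F : ℂ × ℂ → ℂ) :
    eLpNorm F (ENNReal.ofReal p) kap = (∫⁻ q, ‖F q‖ₑ ^ p ∂kap) ^ (1 / p) := by
  rw [eLpNorm_eq_lintegral_rpow_enorm_toReal (by simp; linarith) ENNReal.ofReal_ne_top,
    ENNReal.toReal_ofReal (by linarith)]

lemma gEnergy_eq {p : ℝ} (hp : 1 < p) (f : ℂ → ℂ) :
    gEnergy p f = ∫⁻ q, ‖f q.1 - f q.2‖ₑ ^ p ∂kap := by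
  unfold gEnergy gEnergyOn kap
  rw [Measure.restrict_univ, lintegral_withDensity_eq_lintegral_mul_non_measurable _ (by fun_prop)]
  · refine lintegral_congr fun q => ?_
    simp only [Pi.mul_apply]
    rw [← ofReal_norm, ENNReal.ofReal_rpow_of_nonneg (norm_nonneg _) (by linarith),
      ← ENNReal.ofReal_mul (by positivity)]
    congr 1
    ring
  · filter_upwards with q
    exact ENNReal.ofReal_lt_top

lemma NN_eq {p : ℝ} (hp : 1 < p) (f : ℂ → ℂ) : NN p f = gEnergy p f ^ (1 / p) := by
  rw [gEnergy_eq hp, NN, eLp_eq hp]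

lemma gSeminorm_eq {p : ℝ} (hp : 1 < p) (f : ℂ → ℂ) : gSeminorm p f = (NN p f).toReal := by
  rw [NN_eq hp, gSeminorm, ENNReal.toReal_rpow]

lemma NN_ne_top {p : ℝ} (hp : 1 < p) (f : ℂ → ℂ) : NN p f ≠ ⊤ ↔ gEnergy p f ≠ ⊤ := by
  have : 0 < 1 / p := by positivity
  rw [NN_eq hp, Ne, ENNReal.rpow_eq_top_iff_of_pos this]

lemma ae_fst {P : ℂ → Prop} (h : ∀ᵐ x ∂circleMeasure, P x) : ∀ᵐ q ∂kap, P q.1 :=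
  kap_ac.ae_le (Measure.quasiMeasurePreserving_fst.ae h)

lemma ae_snd {P : ℂ → Prop} (h : ∀ᵐ x ∂circleMeasure, P x) : ∀ᵐ q ∂kap, P q.2 :=
  kap_ac.ae_le (Measure.quasiMeasurePreserving_snd.ae h)

lemma aem_fst {f : ℂ → ℂ} (h : AEMeasurable f circleMeasure) :
    AEMeasurable (fun q : ℂ × ℂ => f q.1) kap :=
  (h.comp_quasiMeasurePreserving Measure.quasiMeasurePreserving_fst).mono_ac kap_ac

lemma aem_snd {f : ℂ → ℂ} (h : AEMeasurable f circleMeasure) :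
    AEMeasurable (fun q : ℂ × ℂ => f q.2) kap :=
  (h.comp_quasiMeasurePreserving Measure.quasiMeasurePreserving_snd).mono_ac kap_ac

lemma aem_D {f : ℂ → ℂ} (h : AEMeasurable f circleMeasure) :
    AEMeasurable (fun q : ℂ × ℂ => f q.1 - f q.2) kap := (aem_fst h).sub (aem_snd h)

lemma one_le_ofReal' {p : ℝ} (hp : 1 < p) : 1 ≤ ENNReal.ofReal p := by
  rw [← ENNReal.ofReal_one]; exact ENNReal.ofReal_le_ofReal hp.le

lemma NN_sub {p : ℝ} (hp : 1 < p) {f g : ℂ → ℂ} (hf : AEMeasurable f circleMeasure)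
    (hg : AEMeasurable g circleMeasure) : NN p (fun x => f x - g x) ≤ NN p f + NN p g := by
  unfold NN
  refine le_trans (le_of_eq ?_) (eLpNorm_sub_le (aem_D hf).aestronglyMeasurable
    (aem_D hg).aestronglyMeasurable (one_le_ofReal' hp))
  congr 1
  funext q
  simp only [Pi.sub_apply]
  ring

lemma NN_mul {p : ℝ} (hp : 1 < p) {u v : ℂ → ℂ} (hu : AEMeasurable u circleMeasure)
    (hv : AEMeasurable v circleMeasure) (hv1 : ∀ᵐ x ∂circleMeasure, ‖v x‖ = 1) :
    NN p (fun x => u x * v x) ≤ NN p u +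
      eLpNorm (fun q : ℂ × ℂ => (v q.1 - v q.2) * u q.2) (ENNReal.ofReal p) kap := by
  have h1 : NN p (fun x => u x * v x) ≤
      eLpNorm (fun q : ℂ × ℂ => (u q.1 - u q.2) * v q.1) (ENNReal.ofReal p) kap +
      eLpNorm (fun q : ℂ × ℂ => (v q.1 - v q.2) * u q.2) (ENNReal.ofReal p) kap := by
    unfold NN
    refine le_trans (le_of_eq ?_) (eLpNorm_add_le ((aem_D hu).mul (aem_fst hv)).aestronglyMeasurable
      ((aem_D hv).mul (aem_snd hu)).aestronglyMeasurable (one_le_ofReal' hp))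
    congr 1
    funext q
    simp only [Pi.add_apply, Pi.mul_apply]
    ring
  refine h1.trans (add_le_add ?_ le_rfl)
  refine eLpNorm_mono_ae ?_
  filter_upwards [ae_fst hv1] with q hq
  simp [hq]

lemma NN_mul_unit {p : ℝ} (hp : 1 < p) {u v : ℂ → ℂ} (hu : AEMeasurable u circleMeasure)
    (hv : AEMeasurable v circleMeasure) (hu1 : ∀ᵐ x ∂circleMeasure, ‖u x‖ = 1)
    (hv1 : ∀ᵐ x ∂circleMeasure, ‖v x‖ = 1) :
    NN p (fun x => u x * v x) ≤ NN p u + NN p v := by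
  refine (NN_mul hp hu hv hv1).trans (add_le_add le_rfl ?_)
  refine eLpNorm_mono_ae ?_
  filter_upwards [ae_snd hu1] with q hq
  simp [hq]

lemma dct {p : ℝ} (hp : 1 < p) {f : ℂ → ℂ} (hf : AEMeasurable f circleMeasure)
    (hfin : NN p f ≠ ⊤) {w : ℕ → ℂ → ℂ} (hw : ∀ n, AEMeasurable (w n) circleMeasure)
    (hb : ∀ n, ∀ᵐ x ∂circleMeasure, ‖w n x‖ ≤ 2)
    (hlim : ∀ᵐ x ∂circleMeasure, Tendsto (fun n => w n x) atTop (nhds 0)) :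
    Tendsto (fun n => eLpNorm (fun q : ℂ × ℂ => (f q.1 - f q.2) * w n q.2) (ENNReal.ofReal p) kap)
      atTop (nhds 0) := by
  have hp0 : 0 < p := by linarith
  simp only [eLp_eq hp]
  have key : Tendsto (fun n => ∫⁻ q : ℂ × ℂ, ‖(f q.1 - f q.2) * w n q.2‖ₑ ^ p ∂kap) atTop
      (nhds (∫⁻ q : ℂ × ℂ, 0 ∂kap)) := by
    refine tendsto_lintegral_of_dominated_convergence'
      (fun q => (2 : ℝ≥0∞) ^ p * ‖f q.1 - f q.2‖ₑ ^ p) ?_ ?_ ?_ ?_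
    · intro n
      exact (((aem_D hf).mul (aem_snd (hw n))).enorm).pow_const p
    · intro n
      filter_upwards [ae_snd (hb n)] with q hq
      rw [enorm_mul, ENNReal.mul_rpow_of_nonneg _ _ hp0.le, mul_comm]
      gcongr
      rw [← ofReal_norm]
      exact (ENNReal.ofReal_le_ofReal hq).trans (by simp)
    · rw [lintegral_const_mul' _ _ (by finiteness), ← gEnergy_eq hp]
      exact ENNReal.mul_ne_top (by finiteness) ((NN_ne_top hp f).1 hfin)
    · filter_upwards [ae_snd hlim] with q hq
      have h1 : Tendsto (fun n => (f q.1 - f q.2) * w n q.2) atTop (nhds 0) := by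
        simpa using hq.const_mul (f q.1 - f q.2)
      have h2 := (h1.enorm).ennrpow_const p
      simpa [hp0] using h2
  rw [lintegral_zero] at key
  have := key.ennrpow_const (1 / p)
  rwa [ENNReal.zero_rpow_of_pos (by positivity)] at this

lemma ae_circle : ∀ᵐ x ∂circleMeasure, x ∈ unitCircle := by
  rw [circleMeasure_eq, cay_emb.ae_map_iff]
  filter_upwards with s
  simp [unitCircle, cay_norm]

lemma ae_ne_neg_one : ∀ᵐ x ∂circleMeasure, x ≠ -1 := by
  rw [circleMeasure_eq, cay_emb.ae_map_iff]
  have h0 : cay 0 = -1 := by rw [cay_eq]; simp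
  refine (withDensity_absolutelyContinuous _ _).ae_le ?_
  filter_upwards [Measure.ae_ne volume (0 : ℝ)] with s hs h
  rw [← h0] at h
  exact hs (cay_injective h)

lemma aem_of_cont {g : ℂ → ℂ} (h : ContinuousOn g unitCircle) : AEMeasurable g circleMeasure := by
  have h1 := h.aemeasurable (μ := circleMeasure) (Metric.isClosed_sphere.measurableSet)
  rwa [Measure.restrict_eq_self_of_ae_mem ae_circle] at h1

lemma HasDegree.aem {g : ℂ → ℂ} {d : ℤ} (h : HasDegree g d) : AEMeasurable g circleMeasure :=
  aem_of_cont h.1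

lemma HasDegree.norm {g : ℂ → ℂ} {d : ℤ} (h : HasDegree g d) :
    ∀ᵐ x ∂circleMeasure, ‖g x‖ = 1 := by
  filter_upwards [ae_circle] with x hx
  simpa [unitCircle] using h.2.1 x hx

lemma exp_mem (θ : ℝ) : Complex.exp (θ * Complex.I) ∈ unitCircle := by
  simp [unitCircle, Complex.norm_exp_ofReal_mul_I]

lemma HasDegree.mul {g h : ℂ → ℂ} {d e : ℤ} (hg : HasDegree g d) (hh : HasDegree h e) :
    HasDegree (fun x => g x * h x) (d + e) := by
  obtain ⟨c1, m1, φ, hφ, e1, t1⟩ := hg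
  obtain ⟨c2, m2, ψ, hψ, e2, t2⟩ := hh
  refine ⟨c1.mul c2, ?_, fun θ => φ θ + ψ θ, hφ.add hψ, ?_, ?_⟩
  · intro z hz
    have a := m1 z hz
    have b := m2 z hz
    simp only [unitCircle, mem_sphere_iff_norm, sub_zero, norm_mul] at a b ⊢
    rw [a, b, one_mul]
  · intro θ hθ
    beta_reduce
    rw [e1 θ hθ, e2 θ hθ, ← Complex.exp_add]
    push_cast
    ring_nf
  · push_cast
    linarith

lemma hasDegree_const (t : ℝ) : HasDegree (fun _ => Complex.exp (t * Complex.I)) 0 :=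
  ⟨continuousOn_const, fun _ _ => exp_mem t, fun _ => t, continuousOn_const, fun _ _ => rfl, by simp⟩

lemma hasDegree_id : HasDegree (fun z => z) 1 :=
  ⟨continuousOn_id, fun _ h => h, fun t => t, continuousOn_id, fun _ _ => rfl, by simp⟩

lemma hasDegree_conj : HasDegree (fun z => (starRingEnd ℂ) z) (-1) := by
  refine ⟨Complex.continuous_conj.continuousOn, ?_, fun t => -t, continuousOn_neg, ?_, by simp⟩
  · intro z hz
    simpa [unitCircle] using hz
  · intro θ _
    beta_reduce
    rw [← Complex.exp_conj]
    simp

lemma HasDegree.mem_classE {p : ℝ} (hp : 1 < p) {h : ℂ → ℂ} {d : ℤ} (hd : HasDegree h d)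
    (hN : NN p h ≠ ⊤) : h ∈ classE p d := by
  have hE := (NN_ne_top hp h).1 hN
  have hp0 : p ≠ 0 := by linarith
  refine ⟨hd.aem, hd.norm, hE, fun _ => h, fun _ => ⟨hd, hE⟩, ?_, ?_⟩
  · simp [hp0]
  · simp [gSeminorm, gEnergy, gEnergyOn, hp0]

lemma mob_mem (r : ℝ) (h0 : 0 ≤ r) (h1 : r < 1) {z : ℂ} (hz : z ∈ unitCircle) :
    mob r z ∈ unitCircle := by
  have hz1 : ‖z‖ = 1 := by simpa [unitCircle] using hz
  have hd := mob_denom r h0 h1 z hz1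
  have hd' : 1 + r * z ≠ 0 := by intro h; rw [h] at hd; simp at hd
  have hzz : z * (starRingEnd ℂ) z = 1 := by
    rw [Complex.mul_conj, Complex.normSq_eq_norm_sq, hz1]; simp
  have h2 : z + r = z * (starRingEnd ℂ) (1 + r * z) := by
    simp only [map_add, map_mul, map_one, Complex.conj_ofReal]
    linear_combination (-(r : ℂ)) * hzz
  simp only [unitCircle, mem_sphere_iff_norm, sub_zero, mob, norm_div]
  rw [h2, norm_mul, hz1, one_mul, Complex.norm_conj, div_self (norm_ne_zero_iff.2 hd')]

lemma mob_cont (r : ℝ) (h0 : 0 ≤ r) (h1 : r < 1) : ContinuousOn (mob r) unitCircle := by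
  unfold mob
  refine ContinuousOn.div (by fun_prop) (by fun_prop) ?_
  intro z hz h
  have hd := mob_denom r h0 h1 z (by simpa [unitCircle] using hz)
  rw [h] at hd; simp at hd

lemma HasDegree.mob {h : ℂ → ℂ} {d : ℤ} (hd : HasDegree h d) (r : ℝ) (h0 : 0 ≤ r) (h1 : r < 1) :
    HasDegree (fun z => h (mob r z)) d := by
  obtain ⟨c1, m1, φ, hφ, e1, t1⟩ := hd
  have hden : ∀ θ : ℝ, 0 < (1 + r * Complex.exp (θ * Complex.I)).re := fun θ =>
    mob_denom r h0 h1 _ (by simpa [unitCircle] using exp_mem θ)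
  set ψ : ℝ → ℝ := fun θ => θ - 2 * Complex.arg (1 + r * Complex.exp (θ * Complex.I)) with hψ
  have hψc : Continuous ψ := by
    refine continuous_id.sub (continuous_const.mul ?_)
    refine continuous_iff_continuousAt.2 fun θ => ?_
    exact ContinuousAt.comp (f := fun θ : ℝ => 1 + r * Complex.exp (θ * Complex.I))
      (Complex.continuousAt_arg (Or.inl (hden θ))) (by fun_prop)
  have harg : ∀ θ : ℝ, (1 + r : ℂ).arg = 0 := fun _ => by
    rw [show (1 + r : ℂ) = ((1 + r : ℝ) : ℂ) by push_cast; ring]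
    exact Complex.arg_ofReal_of_nonneg (by linarith)
  have hψ0 : ψ 0 = 0 := by simp [hψ, harg 0]
  have hψ2 : ψ (2 * Real.pi) = 2 * Real.pi := by simp [hψ, harg 0]
  have hψpi : ψ Real.pi = Real.pi := by
    have : (1 + r * -1 : ℂ).arg = 0 := by
      rw [show (1 + r * -1 : ℂ) = ((1 - r : ℝ) : ℂ) by push_cast; ring]
      exact Complex.arg_ofReal_of_nonneg (by linarith)
    simp only [hψ, Complex.exp_pi_mul_I, this]
    ring
  have hmob : ∀ θ : ℝ, _root_.mob r (Complex.exp (θ * Complex.I)) = Complex.exp (ψ θ * Complex.I) := by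
    intro θ
    set w := 1 + r * Complex.exp (θ * Complex.I) with hw
    have hw0 : w ≠ 0 := by intro h; have := hden θ; rw [← hw, h] at this; simp at this
    have hn : (‖w‖ : ℂ) ≠ 0 := by exact_mod_cast (norm_ne_zero_iff.2 hw0)
    have h3 := Complex.norm_mul_exp_arg_mul_I w
    have h4 : Complex.exp (θ * Complex.I) + r = Complex.exp (θ * Complex.I) * (starRingEnd ℂ) w := by
      rw [hw]
      simp only [map_add, map_mul, map_one, Complex.conj_ofReal, ← Complex.exp_conj, Complex.conj_I]
      have : Complex.exp (θ * Complex.I) * Complex.exp (θ * -Complex.I) = 1 := by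
        rw [← Complex.exp_add]; simp
      linear_combination (-(r : ℂ)) * this
    have h5 : (starRingEnd ℂ) w = ‖w‖ * Complex.exp (-(w.arg * Complex.I)) := by
      conv_lhs => rw [← h3]
      simp only [map_mul, Complex.conj_ofReal, ← Complex.exp_conj, Complex.conj_I]
      ring_nf
    unfold _root_.mob
    rw [← hw, div_eq_iff hw0, h4, h5]
    conv_rhs => rw [← h3]
    have h6 : ψ θ = θ - 2 * w.arg := rfl
    rw [h6]
    push_cast
    have h7 : Complex.exp ((θ - 2 * w.arg) * Complex.I) * Complex.exp (w.arg * Complex.I)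
       = Complex.exp (θ * Complex.I) * Complex.exp (-(w.arg * Complex.I)) := by
      rw [← Complex.exp_add, ← Complex.exp_add]
      ring_nf
    linear_combination (-(‖w‖ : ℂ)) * h7
  have hpi := Real.pi_pos
  -- the only preimage of `1` is `1`
  have hone : ∀ θ ∈ Set.Ioo 0 (2 * Real.pi), Complex.exp (ψ θ * Complex.I) ≠ 1 := by
    intro θ hθ h
    rw [← hmob θ] at h
    have hw0 : 1 + r * Complex.exp (θ * Complex.I) ≠ 0 := by
      intro h; have := hden θ; rw [h] at this; simp at this
    unfold _root_.mob at h
    rw [div_eq_one_iff_eq hw0] at h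
    have h1' : (1 - r : ℂ) ≠ 0 := by exact_mod_cast (sub_pos.2 h1).ne'
    have h8 : Complex.exp (θ * Complex.I) = 1 := by
      apply mul_left_cancel₀ h1'
      linear_combination h
    have h9 := congrArg Complex.re h8
    rw [Complex.exp_ofReal_mul_I_re, Complex.one_re,
      Real.cos_eq_one_iff_of_lt_of_lt (by linarith [hθ.1]) hθ.2] at h9
    exact hθ.1.ne' h9
  have hne0 : ∀ θ ∈ Set.Ioo 0 (2 * Real.pi), ψ θ ≠ 0 ∧ ψ θ ≠ 2 * Real.pi := by
    intro θ hθ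
    constructor <;> intro h <;> apply hone θ hθ <;> rw [h] <;> simp
  have hrange : ∀ θ ∈ Set.Icc 0 (2 * Real.pi), ψ θ ∈ Set.Icc 0 (2 * Real.pi) := by
    intro θ hθ
    rcases eq_or_lt_of_le hθ.1 with h | hl
    · rw [← h, hψ0]; exact ⟨le_rfl, by linarith⟩
    rcases eq_or_lt_of_le hθ.2 with h | hr
    · rw [h, hψ2]; exact ⟨by linarith, le_rfl⟩
    have hsub : Set.uIcc θ Real.pi ⊆ Set.Ioo 0 (2 * Real.pi) :=
      Set.OrdConnected.uIcc_subset Set.ordConnected_Ioo ⟨hl, hr⟩ ⟨hpi, by linarith⟩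
    have hivt := intermediate_value_uIcc (a := θ) (b := Real.pi) hψc.continuousOn
    rw [hψpi] at hivt
    constructor
    · by_contra! hlt
      obtain ⟨x, hx, hx0⟩ := hivt (Set.mem_uIcc_of_le hlt.le hpi.le)
      exact (hne0 x (hsub hx)).1 hx0
    · by_contra! hlt
      obtain ⟨x, hx, hx0⟩ := hivt (Set.mem_uIcc_of_ge (by linarith) hlt.le)
      exact (hne0 x (hsub hx)).2 hx0
  refine ⟨c1.comp (mob_cont r h0 h1) (fun z hz => mob_mem r h0 h1 hz),
    fun z hz => m1 _ (mob_mem r h0 h1 hz), fun θ => φ (ψ θ),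
    hφ.comp hψc.continuousOn hrange, ?_, ?_⟩
  · intro θ hθ
    beta_reduce
    rw [hmob, e1 _ (hrange θ hθ)]
  · simp only [hψ0, hψ2, t1]

lemma line_bound {q : ℝ} (hq1 : 1 < q) (hq2 : q < 2) (s t : ℝ) :
    ‖cay s - cay t‖ ^ q / (s - t) ^ 2 ≤ 2 ^ q *
      ((Set.Icc (-1 : ℝ) 1).indicator (fun u => |u| ^ (q - 2)) (s - t) * (1 + ‖t‖ ^ 2) ^ (-q / 2)
        + (1 + ‖s‖ ^ 2) ^ (-q / 2) * (1 + ‖t‖ ^ 2) ^ (-q / 2)) := by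
  by_cases h : s - t = 0
  · simp only [h]
    rw [zero_pow two_ne_zero, div_zero]
    have : 0 ≤ (Set.Icc (-1 : ℝ) 1).indicator (fun u => |u| ^ (q - 2)) 0 :=
      Set.indicator_nonneg (fun _ _ => by positivity) _
    positivity
  have hpos : 0 < |s - t| := abs_pos.2 h
  have hs : 0 < 1 + ‖s‖ ^ 2 := by positivity
  have ht : 0 < 1 + ‖t‖ ^ 2 := by positivity
  have e1 : ‖cay s - cay t‖ ^ q = 2 ^ q * |s - t| ^ q * ((1 + ‖s‖ ^ 2) ^ (-q / 2) * (1 + ‖t‖ ^ 2) ^ (-q / 2)) := by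
    have : ‖cay s - cay t‖ ^ q = (‖cay s - cay t‖ ^ 2) ^ (q / 2) := by
      rw [← Real.rpow_natCast, ← Real.rpow_mul (norm_nonneg _)]
      congr 1; push_cast; ring
    rw [this, cay_dist_sq]
    have e2 : 4 * (s - t) ^ 2 / ((1 + s ^ 2) * (1 + t ^ 2))
        = (2 * |s - t|) ^ 2 * ((1 + ‖s‖ ^ 2)⁻¹ * (1 + ‖t‖ ^ 2)⁻¹) := by
      rw [mul_pow, sq_abs, Real.norm_eq_abs, Real.norm_eq_abs, sq_abs, sq_abs]
      have h1 : 1 + s ^ 2 ≠ 0 := by positivity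
      have h2 : 1 + t ^ 2 ≠ 0 := by positivity
      field_simp
      norm_num
    rw [e2, Real.mul_rpow (by positivity) (by positivity), Real.mul_rpow (by positivity) (by positivity),
      Real.inv_rpow hs.le, Real.inv_rpow ht.le, ← Real.rpow_neg hs.le, ← Real.rpow_neg ht.le,
      ← Real.rpow_natCast, ← Real.rpow_mul (by positivity), neg_div]
    congr 1
    rw [← Real.mul_rpow (by positivity) (by positivity)]
    congr 1; push_cast; ring
  have e3 : |s - t| ^ q / (s - t) ^ 2 = |s - t| ^ (q - 2) := by
    rw [Real.rpow_sub hpos, ← sq_abs, ← Real.rpow_natCast]; norm_num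
  have e4 : ‖cay s - cay t‖ ^ q / (s - t) ^ 2 = 2 ^ q * (|s - t| ^ (q - 2) *
      ((1 + ‖s‖ ^ 2) ^ (-q / 2) * (1 + ‖t‖ ^ 2) ^ (-q / 2))) := by
    rw [e1, ← e3]; ring
  rw [e4]
  refine mul_le_mul_of_nonneg_left ?_ (by positivity)
  have hBs : (1 + ‖s‖ ^ 2) ^ (-q / 2) ≤ 1 :=
    Real.rpow_le_one_of_one_le_of_nonpos (by nlinarith [norm_nonneg s]) (by linarith)
  have hs0 : 0 ≤ (1 + ‖s‖ ^ 2) ^ (-q / 2) := by positivity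
  have ht0 : 0 ≤ (1 + ‖t‖ ^ 2) ^ (-q / 2) := by positivity
  by_cases hm : s - t ∈ Set.Icc (-1 : ℝ) 1
  · rw [Set.indicator_of_mem hm]
    have : |s - t| ^ (q - 2) * ((1 + ‖s‖ ^ 2) ^ (-q / 2) * (1 + ‖t‖ ^ 2) ^ (-q / 2)) ≤
       |s - t| ^ (q - 2) * (1 * (1 + ‖t‖ ^ 2) ^ (-q / 2)) := by gcongr
    rw [one_mul] at this
    exact this.trans (le_add_of_nonneg_right (by positivity))
  · rw [Set.indicator_of_notMem hm, zero_mul, zero_add]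
    refine mul_le_of_le_one_left (by positivity) ?_
    refine Real.rpow_le_one_of_one_le_of_nonpos ?_ (by linarith)
    by_contra! hlt
    exact hm (abs_le.1 hlt.le)

lemma gEnergy_id_lt_two {q : ℝ} (hq1 : 1 < q) (hq2 : q < 2) : gEnergy q (fun z => z) ≠ ⊤ := by
  rw [gEnergy_line]
  set K : ℝ → ℝ := (Set.Icc (-1 : ℝ) 1).indicator (fun u => |u| ^ (q - 2)) with hK
  set B : ℝ → ℝ := fun t => (1 + ‖t‖ ^ 2) ^ (-q / 2) with hB
  have hBi : Integrable B := integrable_rpow_neg_one_add_norm_sq (by simpa using hq1)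
  have hKm : Measurable K := Measurable.indicator (by fun_prop) measurableSet_Icc
  have hBm : Measurable B := by fun_prop
  have hKi : Integrable K := by
    rw [hK, integrable_indicator_iff measurableSet_Icc]
    have h01 : IntegrableOn (fun u : ℝ => |u| ^ (q - 2)) (Set.Ioc 0 1) := by
      have := (intervalIntegral.intervalIntegrable_rpow' (a := 0) (b := 1) (r := q - 2) (by linarith)).1
      refine this.congr_fun (fun x hx => ?_) measurableSet_Ioc
      simp only
      rw [abs_of_pos hx.1]
    have h10 : IntegrableOn (fun u : ℝ => |u| ^ (q - 2)) (Set.Ico (-1) 0) := by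
      have := h01.comp_neg
      simpa using this
    have hu : Set.Icc (-1 : ℝ) 1 = Set.Ico (-1) 0 ∪ ({0} ∪ Set.Ioc 0 1) := by
      ext x
      simp only [Set.mem_Icc, Set.mem_union, Set.mem_Ico, Set.mem_singleton_iff, Set.mem_Ioc]
      constructor
      · intro h
        rcases lt_trichotomy x 0 with h1 | h1 | h1
        · exact Or.inl ⟨h.1, h1⟩
        · exact Or.inr (Or.inl h1)
        · exact Or.inr (Or.inr ⟨h1, h.2⟩)
      · rintro (h | h | h) <;> constructor <;> linarith
    rw [hu]
    exact h10.union ((integrableOn_singleton (hx := by simp)).union h01)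
  have hb : Integrable (fun z : ℝ × ℝ => 2 ^ q * (K (z.1 - z.2) * B z.2 + B z.1 * B z.2))
      (volume : Measure (ℝ × ℝ)) := by
    refine Integrable.const_mul (Integrable.add ?_ ?_) _
    · have h1 : Integrable (fun z : ℝ × ℝ => K z.1 * B z.2) (volume.prod volume) := hKi.mul_prod hBi
      have := (measurePreserving_sub_prod (volume : Measure ℝ) (volume : Measure ℝ)).integrable_comp_of_integrable h1
      exact this
    · exact hBi.mul_prod hBi
  refine ne_top_of_le_ne_top hb.lintegral_lt_top.ne (lintegral_mono fun z => ?_)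
  exact ENNReal.ofReal_le_ofReal (line_bound hq1 hq2 z.1 z.2)

lemma gEnergy_id {p : ℝ} (hp : 1 < p) : gEnergy p (fun z => z) ≠ ⊤ := by
  by_cases h2 : p < 2
  · exact gEnergy_id_lt_two hp h2
  push Not at h2
  have hfin : gEnergy (3 / 2) (fun z => z) ≠ ⊤ := gEnergy_id_lt_two (by norm_num) (by norm_num)
  rw [gEnergy_line] at hfin ⊢
  have : ∫⁻ q : ℝ × ℝ, ENNReal.ofReal (‖cay q.1 - cay q.2‖ ^ p / (q.1 - q.2) ^ 2) ≤
      ∫⁻ q : ℝ × ℝ, ENNReal.ofReal (2 ^ (p - 3 / 2)) *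
        ENNReal.ofReal (‖cay q.1 - cay q.2‖ ^ (3 / 2 : ℝ) / (q.1 - q.2) ^ 2) := by
    refine lintegral_mono fun q => ?_
    rw [← ENNReal.ofReal_mul (by positivity)]
    refine ENNReal.ofReal_le_ofReal ?_
    rw [← mul_div_assoc]
    refine div_le_div_of_nonneg_right ?_ (by positivity)
    have hle : ‖cay q.1 - cay q.2‖ ≤ 2 := by
      refine (norm_sub_le _ _).trans ?_
      rw [cay_norm, cay_norm]; norm_num
    have e : ‖cay q.1 - cay q.2‖ ^ p
        = ‖cay q.1 - cay q.2‖ ^ (p - 3 / 2) * ‖cay q.1 - cay q.2‖ ^ (3 / 2 : ℝ) := by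
      rw [← Real.rpow_add_of_nonneg (norm_nonneg _) (by linarith) (by norm_num)]
      congr 1; ring
    rw [e]
    refine mul_le_mul_of_nonneg_right ?_ (by positivity)
    exact Real.rpow_le_rpow (norm_nonneg _) hle (by linarith)
  refine ne_top_of_le_ne_top ?_ this
  rw [lintegral_const_mul' _ _ ENNReal.ofReal_ne_top]
  exact ENNReal.mul_ne_top ENNReal.ofReal_ne_top hfin

lemma NN_id {p : ℝ} (hp : 1 < p) : NN p (fun z => z) ≠ ⊤ := (NN_ne_top hp _).2 (gEnergy_id hp)

lemma NN_conj {p : ℝ} (hp : 1 < p) : NN p (fun z => (starRingEnd ℂ) z) ≠ ⊤ := by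
  refine ne_top_of_le_ne_top (NN_id hp) (eLpNorm_mono_ae ?_)
  filter_upwards with q
  rw [← map_sub, Complex.norm_conj]

lemma exists_degree {p : ℝ} (hp : 1 < p) (d : ℤ) : ∃ h, HasDegree h d ∧ NN p h ≠ ⊤ := by
  induction d using Int.induction_on with
  | zero =>
    refine ⟨_, hasDegree_const 0, ?_⟩
    simp [NN]
  | succ n ih =>
    obtain ⟨h, h1, h2⟩ := ih
    refine ⟨_, h1.mul hasDegree_id, ?_⟩
    refine ne_top_of_le_ne_top (ENNReal.add_ne_top.2 ⟨h2, NN_id hp⟩)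
      (NN_mul_unit hp h1.aem hasDegree_id.aem h1.norm hasDegree_id.norm)
  | pred n ih =>
    obtain ⟨h, h1, h2⟩ := ih
    refine ⟨_, h1.mul hasDegree_conj, ?_⟩
    refine ne_top_of_le_ne_top (ENNReal.add_ne_top.2 ⟨h2, NN_conj hp⟩)
      (NN_mul_unit hp h1.aem hasDegree_conj.aem h1.norm hasDegree_conj.norm)

lemma exists_good {p : ℝ} (hp : 1 < p) (d : ℤ) {δ : ℝ} (hδ : 0 < δ) :
    ∃ h, HasDegree h d ∧ NN p h ≠ ⊤ ∧ h 1 = 1 ∧ (NN p h).toReal < sigmaP p d + δ := by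
  have hne : (gSeminorm p '' classE p d).Nonempty := by
    obtain ⟨h, h1, h2⟩ := exists_degree hp d
    exact ⟨_, h, h1.mem_classE hp h2, rfl⟩
  obtain ⟨_, ⟨f, hf, rfl⟩, hlt⟩ := Real.lt_sInf_add_pos hne (ε := δ / 2) (by linarith)
  obtain ⟨fm, fn, fE, g, hg, -, hlim⟩ := hf
  have hev := (tendsto_order.1 hlim).2 (δ / 2) (by linarith)
  obtain ⟨k, hk⟩ := hev.exists
  obtain ⟨hgd, hgE⟩ := hg k
  have hgN := (NN_ne_top hp _).2 hgE
  have hfN := (NN_ne_top hp _).2 fE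
  have hdN : NN p (fun x => f x - g k x) ≠ ⊤ :=
    ne_top_of_le_ne_top (ENNReal.add_ne_top.2 ⟨hfN, hgN⟩) (NN_sub hp fm hgd.aem)
  have hle : NN p (g k) ≤ NN p f + NN p (fun x => f x - g k x) := by
    have := NN_sub hp (g := fun x => f x - g k x) fm (fm.sub hgd.aem)
    simpa using this
  rw [gSeminorm_eq hp] at hk hlt
  have hbound : (NN p (g k)).toReal < sigmaP p d + δ := by
    have h1 := ENNReal.toReal_mono (ENNReal.add_ne_top.2 ⟨hfN, hdN⟩) hle
    rw [ENNReal.toReal_add hfN hdN] at h1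
    have : sigmaP p d = sInf (gSeminorm p '' classE p d) := rfl
    linarith
  obtain ⟨c1, m1, φ, hφ, e1, t1⟩ := id hgd
  have hd2 := hgd.mul (hasDegree_const (-(φ 0)))
  rw [add_zero] at hd2
  have hNle : NN p (fun x => g k x * Complex.exp (((-(φ 0) : ℝ) : ℂ) * Complex.I)) ≤ NN p (g k) := by
    refine eLpNorm_mono_ae ?_
    filter_upwards with q
    rw [← sub_mul, norm_mul, Complex.norm_exp_ofReal_mul_I, mul_one]
  refine ⟨_, hd2, ne_top_of_le_ne_top hgN hNle, ?_, (ENNReal.toReal_mono hgN hNle).trans_lt hbound⟩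
  have h0 := e1 0 ⟨le_rfl, by positivity⟩
  simp only [Complex.ofReal_zero, zero_mul, Complex.exp_zero] at h0
  beta_reduce
  rw [h0, ← Complex.exp_add]
  simp

lemma tendsto_mob {h : ℂ → ℂ} {d : ℤ} (hd : HasDegree h d) (h1 : h 1 = 1) {r : ℕ → ℝ}
    (hr0 : ∀ n, 0 ≤ r n) (hr1 : ∀ n, r n < 1) (hr : Tendsto r atTop (nhds 1)) :
    ∀ᵐ x ∂circleMeasure, Tendsto (fun n => 1 - h (mob (r n) x)) atTop (nhds 0) := by
  filter_upwards [ae_circle, ae_ne_neg_one] with x hx hx1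
  have hx2 : 1 + x ≠ 0 := by
    intro hh; apply hx1; linear_combination hh
  have hrc : Tendsto (fun n => (r n : ℂ)) atTop (nhds ((1 : ℝ) : ℂ)) :=
    (Complex.continuous_ofReal.tendsto 1).comp hr
  have hm : Tendsto (fun n => mob (r n) x) atTop (nhds 1) := by
    have := (hrc.const_add x).div ((hrc.mul_const x).const_add 1) (by simpa using hx2)
    have e : (x + ((1 : ℝ) : ℂ)) / (1 + ((1 : ℝ) : ℂ) * x) = 1 := by
      rw [div_eq_one_iff_eq (by simpa using hx2)]; simp [add_comm]
    rw [e] at this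
    exact this
  have hm' : Tendsto (fun n => mob (r n) x) atTop (nhdsWithin 1 unitCircle) :=
    tendsto_nhdsWithin_iff.2 ⟨hm, Eventually.of_forall fun n => mob_mem _ (hr0 n) (hr1 n) hx⟩
  have hc := (hd.1 1 (by simp [unitCircle])).tendsto.comp hm'
  rw [h1] at hc
  simpa using hc.const_sub 1

lemma mul_mem_classE {p : ℝ} (hp : 1 < p) {d1 d : ℤ} {f h : ℂ → ℂ} (hf : f ∈ classE p d1)
    (hh : HasDegree h d) (hN : NN p h ≠ ⊤) : (fun x => f x * h x) ∈ classE p (d1 + d) := by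
  obtain ⟨fm, fn, fE, g, hg, hL, hS⟩ := hf
  have hp0 : 0 < p := by linarith
  have hfN := (NN_ne_top hp _).2 fE
  have hgN : ∀ k, NN p (g k) ≠ ⊤ := fun k => (NN_ne_top hp _).2 (hg k).2
  have hb : ∀ k, ∀ᵐ x ∂circleMeasure, ‖f x - g k x‖ ≤ 2 := by
    intro k
    filter_upwards [fn, (hg k).1.norm] with x h1 h2
    refine (norm_sub_le _ _).trans ?_
    rw [h1, h2]; norm_num
  have hm : ∀ k, AEMeasurable (fun x => f x - g k x) circleMeasure := fun k => fm.sub (hg k).1.aem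
  -- a.e. convergence of a subsequence
  obtain ⟨ns, hns, hae⟩ : ∃ ns : ℕ → ℕ, StrictMono ns ∧ ∀ᵐ x ∂circleMeasure,
      Tendsto (fun i => ‖f x - g (ns i) x‖ ^ p) atTop (nhds (0 : ℝ)) := by
    refine TendstoInMeasure.exists_seq_tendsto_ae (f := fun k x => ‖f x - g k x‖ ^ p)
      (g := fun _ => (0 : ℝ)) ?_
    refine tendstoInMeasure_of_tendsto_eLpNorm (p := 1) one_ne_zero
      (fun k => ((hm k).norm.pow_const p).aestronglyMeasurable) aestronglyMeasurable_const ?_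
    have e : ∀ k, eLpNorm ((fun x => ‖f x - g k x‖ ^ p) - fun _ => (0 : ℝ)) 1 circleMeasure
        = ENNReal.ofReal (∫ x, ‖f x - g k x‖ ^ p ∂circleMeasure) := by
      intro k
      rw [eLpNorm_one_eq_lintegral_enorm, ofReal_integral_eq_lintegral_ofReal]
      · refine lintegral_congr fun x => ?_
        simp only [Pi.sub_apply, sub_zero]
        rw [Real.enorm_eq_ofReal (by positivity)]
      · refine Integrable.of_bound ((hm k).norm.pow_const p).aestronglyMeasurable (2 ^ p) ?_
        filter_upwards [hb k] with x hx
        rw [Real.norm_eq_abs, abs_of_nonneg (by positivity)]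
        exact Real.rpow_le_rpow (norm_nonneg _) hx hp0.le
      · filter_upwards with x
        positivity
    simp only [e]
    have := ENNReal.tendsto_ofReal hL
    simpa using this
  have hae' : ∀ᵐ x ∂circleMeasure, Tendsto (fun i => f x - g (ns i) x) atTop (nhds 0) := by
    filter_upwards [hae] with x hx
    rw [tendsto_zero_iff_norm_tendsto_zero]
    have := hx.rpow_const (p := 1 / p) (Or.inr (by positivity))
    rw [Real.zero_rpow (by positivity)] at this
    refine this.congr fun i => ?_
    rw [← Real.rpow_mul (norm_nonneg _), mul_one_div_cancel hp0.ne', Real.rpow_one]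
  have hfhN : NN p (fun x => f x * h x) ≠ ⊤ :=
    ne_top_of_le_ne_top (ENNReal.add_ne_top.2 ⟨hfN, hN⟩) (NN_mul_unit hp fm hh.aem fn hh.norm)
  refine ⟨fm.mul hh.aem, ?_, (NN_ne_top hp _).1 hfhN, fun i x => g (ns i) x * h x, ?_, ?_, ?_⟩
  · filter_upwards [fn, hh.norm] with x h1 h2
    rw [norm_mul, h1, h2, one_mul]
  · intro i
    refine ⟨(hg _).1.mul hh, (NN_ne_top hp _).1 ?_⟩
    exact ne_top_of_le_ne_top (ENNReal.add_ne_top.2 ⟨hgN (ns i), hN⟩)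
      (NN_mul_unit hp (hg _).1.aem hh.aem (hg _).1.norm hh.norm)
  · refine (hL.comp hns.tendsto_atTop).congr fun i => ?_
    refine integral_congr_ae ?_
    filter_upwards [hh.norm] with x hx
    rw [← sub_mul, norm_mul, hx, mul_one]
  · simp only [gSeminorm_eq hp] at hS ⊢
    have hdN : ∀ k, NN p (fun x => f x - g k x) ≠ ⊤ := fun k =>
      ne_top_of_le_ne_top (ENNReal.add_ne_top.2 ⟨hfN, hgN k⟩) (NN_sub hp fm (hg k).1.aem)
    have hS' : Tendsto (fun k => NN p (fun x => f x - g k x)) atTop (nhds 0) := by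
      have := ENNReal.tendsto_ofReal hS
      simpa [ENNReal.ofReal_toReal (hdN _)] using this
    have hD := dct hp hh.aem hN (w := fun i x => f x - g (ns i) x) (fun i => hm _)
      (fun i => hb _) hae'
    have hsum := (hS'.comp hns.tendsto_atTop).add hD
    rw [add_zero] at hsum
    have hle : ∀ i, NN p (fun x => f x * h x - g (ns i) x * h x) ≤
        NN p (fun x => f x - g (ns i) x) + eLpNorm (fun q : ℂ × ℂ => (h q.1 - h q.2) *
          (f q.2 - g (ns i) q.2)) (ENNReal.ofReal p) kap := by
      intro i
      have := NN_mul hp (hm (ns i)) hh.aem hh.norm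
      simpa only [sub_mul] using this
    have hfin := tendsto_of_tendsto_of_tendsto_of_le_of_le tendsto_const_nhds hsum
      (fun i => bot_le) hle
    have hz := (ENNReal.tendsto_toReal ENNReal.zero_ne_top).comp hfin
    rw [ENNReal.toReal_zero] at hz
    exact hz

lemma core {p : ℝ} (hp : 1 < p) {d1 d2 : ℤ} {f : ℂ → ℂ} (hf : f ∈ classE p d1) {δ : ℝ}
    (hδ : 0 < δ) : ∃ g ∈ classE p d2,
      gSeminorm p (fun x => f x - g x) < sigmaP p (d2 - d1) + δ := by
  obtain ⟨h, hd, hN, h1, hlt⟩ := exists_good hp (d2 - d1) hδ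
  obtain ⟨fm, fn, fE, -⟩ := id hf
  have hfN := (NN_ne_top hp _).2 fE
  set r : ℕ → ℝ := fun n => 1 - 1 / ((n : ℝ) + 1) with hr
  have hr0 : ∀ n, 0 ≤ r n := by
    intro n
    have : 1 / ((n : ℝ) + 1) ≤ 1 := by
      rw [div_le_one (by positivity)]
      linarith [(Nat.cast_nonneg n : (0 : ℝ) ≤ n)]
    simp only [hr]; linarith
  have hr1 : ∀ n, r n < 1 := by
    intro n
    have : 0 < 1 / ((n : ℝ) + 1) := by positivity
    simp only [hr]; linarith
  have hrl : Tendsto r atTop (nhds 1) := by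
    have := (tendsto_one_div_add_atTop_nhds_zero_nat (𝕜 := ℝ)).const_sub 1
    rwa [sub_zero] at this
  set H : ℕ → ℂ → ℂ := fun n z => h (mob (r n) z) with hH
  have hHd : ∀ n, HasDegree (H n) (d2 - d1) := fun n => hd.mob (r n) (hr0 n) (hr1 n)
  have hHN : ∀ n, NN p (H n) = NN p h := by
    intro n
    rw [NN_eq hp, NN_eq hp, hH, gEnergy_mob p h (r n) (hr0 n) (hr1 n)]
  have hwm : ∀ n, AEMeasurable (fun x => 1 - H n x) circleMeasure := fun n =>
    (hHd n).aem.const_sub 1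
  have hD := dct hp fm hfN (w := fun n x => 1 - H n x) hwm
    (fun n => by
      filter_upwards [(hHd n).norm] with x hx
      refine (norm_sub_le _ _).trans ?_
      rw [hx, norm_one]; norm_num) (tendsto_mob hd h1 hr0 hr1 hrl)
  have hle : ∀ n, NN p (fun x => f x - f x * H n x) ≤ NN p h + eLpNorm (fun q : ℂ × ℂ =>
      (f q.1 - f q.2) * (1 - H n q.2)) (ENNReal.ofReal p) kap := by
    intro n
    have a := NN_mul hp (hwm n) fm fn
    have b : NN p (fun x => 1 - H n x) ≤ NN p h := by
      rw [← hHN n]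
      refine eLpNorm_mono_ae ?_
      filter_upwards with q
      rw [sub_sub_sub_cancel_left, norm_sub_rev]
    have c : (fun x => f x - f x * H n x) = fun x => (1 - H n x) * f x := by
      funext x; ring
    rw [c]
    exact a.trans (add_le_add b le_rfl)
  have hsum := hD.const_add (NN p h)
  rw [add_zero] at hsum
  have hlt' : NN p h < ENNReal.ofReal (sigmaP p (d2 - d1) + δ) :=
    (ENNReal.lt_ofReal_iff_toReal_lt hN).2 hlt
  obtain ⟨n, hn⟩ := ((tendsto_order.1 hsum).2 _ hlt').exists
  have hfinal := (hle n).trans_lt hn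
  refine ⟨fun x => f x * H n x, ?_, ?_⟩
  · have := mul_mem_classE hp hf (hHd n) (by rw [hHN n]; exact hN)
    rwa [add_sub_cancel] at this
  · rw [gSeminorm_eq hp]
    exact (ENNReal.lt_ofReal_iff_toReal_lt hfinal.ne_top).1 hfinal

lemma gSeminorm_nonneg (p : ℝ) (f : ℂ → ℂ) : 0 ≤ gSeminorm p f := by
  unfold gSeminorm; positivity

lemma sigmaP_nonneg (p : ℝ) (d : ℤ) : 0 ≤ sigmaP p d := by
  refine Real.sInf_nonneg ?_
  rintro _ ⟨f, -, rfl⟩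
  exact gSeminorm_nonneg p f

/-- **Upper bound.** `Dist_{W^{1/p,p}}(𝓔_{d₁}, 𝓔_{d₂}) ≤ σ_p(d₂ - d₁)`; more precisely,
for every `f ∈ 𝓔_{d₁}` and every `ε > 0` there is `g ∈ 𝓔_{d₂}` with
`|f - g|_{W^{1/p,p}}^p ≤ σ_p^p(d₂ - d₁) + ε`. -/
theorem dist_classes_le_sigma (p : ℝ) (hp : 1 < p) (d1 d2 : ℤ) :
    DistW p d1 d2 ≤ sigmaP p (d2 - d1) ∧
    ∀ f ∈ classE p d1, ∀ ε > (0 : ℝ), ∃ g ∈ classE p d2,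
      gSeminorm p (fun x => f x - g x) ^ p ≤ sigmaP p (d2 - d1) ^ p + ε := by
  refine ⟨?_, ?_⟩
  · refine Real.sSup_le ?_ (sigmaP_nonneg _ _)
    rintro _ ⟨f, hf, rfl⟩
    refine le_of_forall_pos_le_add fun δ hδ => ?_
    obtain ⟨g, hg, hlt⟩ := core hp (d2 := d2) hf hδ
    refine le_trans (csInf_le ⟨0, ?_⟩ ⟨g, hg, rfl⟩) hlt.le
    rintro _ ⟨g, -, rfl⟩
    exact gSeminorm_nonneg p _
  · intro f hf ε hε
    have hp0 : 0 < p := by linarith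
    have hc : ContinuousAt (fun δ : ℝ => (sigmaP p (d2 - d1) + δ) ^ p) 0 :=
      (continuousAt_const.add continuousAt_id).rpow_const (Or.inr hp0.le)
    have hev := (tendsto_order.1 hc.tendsto).2 (sigmaP p (d2 - d1) ^ p + ε)
      (by rw [add_zero]; linarith)
    obtain ⟨δ, hδ, hδ0⟩ := ((hev.filter_mono nhdsWithin_le_nhds).and
      (self_mem_nhdsWithin : Set.Ioi (0 : ℝ) ∈ nhdsWithin 0 (Set.Ioi 0))).exists
    obtain ⟨g, hg, hlt⟩ := core hp (d2 := d2) hf (Set.mem_Ioi.1 hδ0)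
    refine ⟨g, hg, le_trans ?_ hδ.le⟩
    exact Real.rpow_le_rpow (gSeminorm_nonneg p _) hlt.le hp0.le
end

section
/- For p = 2 and every d ∈ ℤ, the minimal energy in the class E_d is σ_2(d) = 2π·|d|^{1/2}; that is, inf{|f|_{W^{1/2,2}} : f ∈ E_d} = 2π·|d|^{1/2}, and the infimum is attained by the map z ↦ z^d. -/
open MeasureTheory Filter
open scoped ENNReal

noncomputable section

/-- The point of the unit circle with angle `θ`. -/
def ee (θ : ℝ) : ℂ := Complex.exp (θ * Complex.I)

lemma ee_add (x y : ℝ) : ee (x + y) = ee x * ee y := by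
  simp [ee, add_mul, Complex.exp_add]

lemma norm_ee (x : ℝ) : ‖ee x‖ = 1 := Complex.norm_exp_ofReal_mul_I x

lemma continuous_ee : Continuous ee := by unfold ee; fun_prop

lemma ee_zero : ee 0 = 1 := by simp [ee]

lemma ee_neg_mul (x : ℝ) : ee (-x) * ee x = 1 := by
  rw [← ee_add]; simp [ee_zero]

lemma ee_int (n : ℤ) : ee (n * (2 * Real.pi)) = 1 := by
  rw [ee, Complex.exp_eq_one_iff]
  exact ⟨n, by push_cast; ring⟩

lemma ee_two_pi : ee (2 * Real.pi) = 1 := by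
  have := ee_int 1
  simpa using this

lemma ee_mul_int (n : ℤ) (x : ℝ) : ee (n * x) = ee x ^ n := by
  rw [ee, ee, ← Complex.exp_int_mul]; congr 1; push_cast; ring

lemma ee_mul_nat (n : ℕ) (x : ℝ) : ee (n * x) = ee x ^ n := by
  have := ee_mul_int n x
  simpa using this

/-- Fourier coefficients. -/
def fc (G : ℝ → ℂ) (n : ℤ) : ℂ := fourierCoeffOn Real.two_pi_pos G n

lemma fc_eq (G : ℝ → ℂ) (n : ℤ) :
    fc G n = (1 / (2 * Real.pi) : ℝ) • ∫ x in (0:ℝ)..(2 * Real.pi), ee (-(n * x)) * G x := by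
  rw [fc, fourierCoeffOn_eq_integral]
  rw [sub_zero]
  congr 1
  apply intervalIntegral.integral_congr
  intro x _
  simp only [smul_eq_mul]
  congr 1
  rw [fourier_coe_apply, ee]
  congr 1
  have : (Real.pi : ℂ) ≠ 0 := by exact_mod_cast Real.pi_ne_zero
  push_cast
  field_simp

lemma fc_shift (G : ℝ → ℂ) (hG : Continuous G) (hp : Function.Periodic G (2 * Real.pi))
    (t : ℝ) (c : ℂ) (n : ℤ) :
    fc (fun x => G (x + t) - c * G x) n = (ee (n * t) - c) * fc G n := by
  have c1 : Continuous fun x : ℝ => ee (-(n * x)) := continuous_ee.comp (by fun_prop)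
  rw [fc_eq, fc_eq]
  have h1 : ∫ x in (0:ℝ)..(2 * Real.pi), ee (-(n * x)) * G (x + t)
      = ee (n * t) * ∫ x in (0:ℝ)..(2 * Real.pi), ee (-(n * x)) * G x := by
    have hper : Function.Periodic (fun x => ee (-(n * x)) * G x) (2 * Real.pi) := by
      intro x
      simp only [hp x]
      congr 1
      rw [show -((n:ℝ) * (x + 2 * Real.pi)) = -(n * x) + ((-n : ℤ) : ℝ) * (2 * Real.pi) by
        push_cast; ring, ee_add, ee_int, mul_one]
    have h2 := hper.intervalIntegral_add_eq 0 t
    have h3 := intervalIntegral.integral_comp_add_right (a := 0) (b := 2 * Real.pi)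
      (fun x => ee (-(n * x)) * G x) t
    rw [zero_add] at h2 h3
    rw [h2, add_comm t, ← h3, ← intervalIntegral.integral_const_mul]
    apply intervalIntegral.integral_congr
    intro x _
    simp only
    rw [← mul_assoc, ← ee_add]
    congr 2
    ring
  have h2 : ∫ x in (0:ℝ)..(2 * Real.pi), ee (-(n * x)) * (G (x + t) - c * G x)
      = (∫ x in (0:ℝ)..(2 * Real.pi), ee (-(n * x)) * G (x + t))
        - c * ∫ x in (0:ℝ)..(2 * Real.pi), ee (-(n * x)) * G x := by
    rw [← intervalIntegral.integral_const_mul, ← intervalIntegral.integral_sub]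
    · apply intervalIntegral.integral_congr
      intro x _
      simp only
      ring
    · apply Continuous.intervalIntegrable
      fun_prop
    · apply Continuous.intervalIntegrable
      fun_prop
  rw [h2, h1]
  simp only [Complex.real_smul]
  ring

lemma parseval (G : ℝ → ℂ) (hG : Continuous G) (hp : Function.Periodic G (2 * Real.pi))
    (t : ℝ) (c : ℂ) :
    HasSum (fun n : ℤ => ‖fc G n‖ ^ 2 * ‖ee (n * t) - c‖ ^ 2)
      ((2 * Real.pi)⁻¹ * ∫ x in (0:ℝ)..(2 * Real.pi), ‖G (x + t) - c * G x‖ ^ 2) := by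
  have hc : Continuous fun x => G (x + t) - c * G x := by fun_prop
  have hL : MemLp (fun x => G (x + t) - c * G x) 2
      (volume.restrict (Set.Ioc 0 (2 * Real.pi))) := by
    rw [memLp_two_iff_integrable_sq_norm hc.aestronglyMeasurable]
    exact (intervalIntegrable_iff_integrableOn_Ioc_of_le Real.two_pi_pos.le).1
      (Continuous.intervalIntegrable (by fun_prop) _ _)
  have := hasSum_sq_fourierCoeffOn Real.two_pi_pos hL
  rw [sub_zero, smul_eq_mul] at this
  convert this using 2 with n
  have h := fc_shift G hG hp t c n
  rw [fc] at h
  rw [h, norm_mul]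
  ring

/-- Integral of a character over a period. -/
lemma integral_ee (n : ℤ) (hn : n ≠ 0) :
    ∫ x in (0:ℝ)..(2 * Real.pi), ee (n * x) = 0 := by
  have h := integral_exp_mul_complex (a := 0) (b := 2 * Real.pi) (c := n * Complex.I)
    (by simp [hn])
  have h2 := ee_int n
  simp only [ee] at *
  have : ∀ x : ℝ, (((n * x : ℝ)) : ℂ) * Complex.I = n * Complex.I * x := by
    intro x; push_cast; ring
  simp only [this] at *
  rw [h, h2]
  simp

lemma fejer_sum (n : ℕ) :
    ∫ x in (0:ℝ)..(2 * Real.pi), ‖∑ k ∈ Finset.range n, ee (k * x)‖ ^ 2 = 2 * Real.pi * n := by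
  have ce : ∀ r : ℝ, Continuous fun x : ℝ => ee (r * x) := fun r =>
    continuous_ee.comp (by fun_prop)
  induction n with
  | zero => simp
  | succ n ih =>
    have key : ∀ x : ℝ, ‖∑ k ∈ Finset.range (n+1), ee (k * x)‖ ^ 2
        = ‖∑ k ∈ Finset.range n, ee (k * x)‖ ^ 2 + 1
          + 2 * (∑ k ∈ Finset.range n, ee (((k - n : ℤ) : ℝ) * x)).re := by
      intro x
      rw [Finset.sum_range_succ, ← Complex.normSq_eq_norm_sq, Complex.normSq_add,
        Complex.normSq_eq_norm_sq, Complex.normSq_eq_norm_sq, norm_ee]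
      rw [Finset.sum_mul, one_pow]
      congr 3
      apply Finset.sum_congr rfl
      intro k _
      have : (starRingEnd ℂ) (ee (n * x)) = ee (-(n * x)) := by
        simp [ee, ← Complex.exp_conj]
      rw [this, ← ee_add]
      congr 1
      push_cast; ring
    simp_rw [key]
    have hz : ∫ x in (0:ℝ)..(2 * Real.pi),
        2 * (∑ k ∈ Finset.range n, ee (((k - n : ℤ) : ℝ) * x)).re = 0 := by
      rw [intervalIntegral.integral_const_mul]
      have h3 : ∫ x in (0:ℝ)..(2 * Real.pi),
        (∑ k ∈ Finset.range n, ee (((k - n : ℤ) : ℝ) * x)) = 0 := by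
        rw [intervalIntegral.integral_finsetSum]
        · apply Finset.sum_eq_zero
          intro k hk
          apply integral_ee
          have := Finset.mem_range.1 hk
          omega
        · intro i _
          exact (ce _).intervalIntegrable _ _
      have h4 := Complex.reCLM.intervalIntegral_comp_comm (a := 0) (b := 2 * Real.pi)
        (μ := volume) (f := fun x : ℝ => ∑ k ∈ Finset.range n, ee (((k - n : ℤ) : ℝ) * x))
        (Continuous.intervalIntegrable (continuous_finsetSum _ fun i _ => ce _) _ _)
      simp only [Complex.reCLM_apply] at h4
      rw [h4, h3]
      simp
    have c1 : Continuous fun x : ℝ => ∑ k ∈ Finset.range n, ee (k * x) :=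
      continuous_finsetSum _ fun i _ => ce _
    have c2 : Continuous fun x : ℝ => ∑ k ∈ Finset.range n, ee (((k - n : ℤ) : ℝ) * x) :=
      continuous_finsetSum _ fun i _ => ce _
    rw [intervalIntegral.integral_add, intervalIntegral.integral_add, hz, ih]
    · simp; ring
    · exact Continuous.intervalIntegrable (by fun_prop) _ _
    · exact Continuous.intervalIntegrable (by fun_prop) _ _
    · exact Continuous.intervalIntegrable (by fun_prop) _ _
    · exact Continuous.intervalIntegrable (Continuous.const_mul (Complex.continuous_re.comp c2) _) _ _

lemma ee_ne_one {x : ℝ} (h0 : 0 < x) (h1 : x < 2 * Real.pi) : ee x ≠ 1 := by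
  intro h
  rw [ee, Complex.exp_eq_one_iff] at h
  obtain ⟨n, hn⟩ := h
  have hn' : (x : ℂ) = ((n * (2 * Real.pi) : ℝ) : ℂ) := by
    have hI := Complex.I_ne_zero
    apply mul_right_cancel₀ hI
    rw [hn]; push_cast; ring
  have hx : x = n * (2 * Real.pi) := by exact_mod_cast hn'
  have hp := Real.two_pi_pos
  have a1 : (0:ℝ) < n := by by_contra hc; nlinarith
  have a2 : (n:ℝ) < 1 := by by_contra hc; nlinarith
  have a1' : 0 < n := by exact_mod_cast a1
  have a2' : n < 1 := by exact_mod_cast a2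
  omega

lemma norm_ee_int_abs (n : ℤ) (x : ℝ) : ‖ee (n * x) - 1‖ = ‖ee (n.natAbs * x) - 1‖ := by
  rcases Int.natAbs_eq n with h | h
  · have : (n:ℝ) = (n.natAbs : ℝ) := by
      conv_lhs => rw [h]
      simp
    rw [this]
  · have : (n:ℝ) = -(n.natAbs : ℝ) := by
      conv_lhs => rw [h]
      simp
    rw [this]
    have h2 := ee_neg_mul (n.natAbs * x)
    have : ee (-(n.natAbs : ℝ) * x) - 1 = ee (-(n.natAbs * x)) * (1 - ee (n.natAbs * x)) := by
      rw [mul_sub, h2, neg_mul]; ring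
    rw [this, norm_mul, norm_ee, one_mul, norm_sub_rev]

lemma fejer_lint (n : ℤ) :
    ∫⁻ t in Set.Ico 0 (2 * Real.pi), ENNReal.ofReal (‖ee (n * t) - 1‖ ^ 2 / ‖ee t - 1‖ ^ 2)
      = ENNReal.ofReal (2 * Real.pi * |(n:ℝ)|) := by
  have ce : ∀ r : ℝ, Continuous fun x : ℝ => ee (r * x) := fun r =>
    continuous_ee.comp (by fun_prop)
  have c1 : Continuous fun x : ℝ => ∑ k ∈ Finset.range n.natAbs, ee (k * x) :=
      continuous_finsetSum _ fun i _ => ce _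
  rw [Measure.restrict_congr_set Ico_ae_eq_Ioc, ← Measure.restrict_congr_set Ioo_ae_eq_Ioc]
  have : ∀ t ∈ Set.Ioo 0 (2 * Real.pi),
      ENNReal.ofReal (‖ee (n * t) - 1‖ ^ 2 / ‖ee t - 1‖ ^ 2)
       = ENNReal.ofReal (‖∑ k ∈ Finset.range n.natAbs, ee (k * t)‖ ^ 2) := by
    intro t ht
    have h1 := ee_ne_one ht.1 ht.2
    congr 1
    simp_rw [ee_mul_nat]
    rw [geom_sum_eq h1, norm_ee_int_abs, ee_mul_nat, norm_div, div_pow]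
  rw [setLIntegral_congr_fun measurableSet_Ioo this]
  rw [Measure.restrict_congr_set Ioo_ae_eq_Ioc, ← ofReal_integral_eq_lintegral_ofReal,
    ← intervalIntegral.integral_of_le Real.two_pi_pos.le, fejer_sum]
  · congr 2
    simp
  · exact (intervalIntegrable_iff_integrableOn_Ioc_of_le Real.two_pi_pos.le).1
      (Continuous.intervalIntegrable (by fun_prop) _ _)
  · filter_upwards with x
    positivity

end

noncomputable section

instance inst_s6 : IsFiniteMeasure circleMeasure := by unfold circleMeasure; infer_instance

lemma ee_mem (x : ℝ) : ee x ∈ unitCircle := by simp [unitCircle, norm_ee]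

lemma measurableSet_unitCircle : MeasurableSet unitCircle := Metric.isClosed_sphere.measurableSet

lemma circleMeasure_eq_s6 : circleMeasure = Measure.map ee (volume.restrict (Set.Ico 0 (2 * Real.pi))) :=
  rfl

lemma ae_mem_unitCircle : ∀ᵐ z ∂circleMeasure, z ∈ unitCircle := by
  rw [circleMeasure_eq_s6]
  exact (ae_map_iff (p := fun z => z ∈ unitCircle) continuous_ee.measurable.aemeasurable
    measurableSet_unitCircle).2 (ae_of_all _ ee_mem)

lemma aemeasurable_circle {g : ℂ → ℂ} (hg : ContinuousOn g unitCircle) :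
    AEMeasurable g circleMeasure := by
  have := hg.aemeasurable measurableSet_unitCircle (μ := circleMeasure)
  rwa [Measure.restrict_eq_self_of_ae_mem ae_mem_unitCircle] at this

lemma lint_shift (K : ℝ → ℝ≥0∞) (hK : Function.Periodic K (2 * Real.pi)) (x : ℝ) :
    ∫⁻ y in Set.Ico 0 (2 * Real.pi), K y = ∫⁻ t in Set.Ico 0 (2 * Real.pi), K (x + t) := by
  rw [Measure.restrict_congr_set Ico_ae_eq_Ioc]
  have h1 := (isAddFundamentalDomain_Ioc Real.two_pi_pos 0 volume).setLIntegral_eq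
    (isAddFundamentalDomain_Ioc Real.two_pi_pos x volume) K (by
      rintro ⟨g, hg⟩ y
      obtain ⟨n, rfl⟩ := AddSubgroup.mem_zmultiples_iff.1 hg
      have := hK.zsmul n y
      rw [← this]
      congr 1
      simp [AddSubgroup.vadd_def, add_comm])
  rw [zero_add] at h1
  rw [h1]
  have h2 := (measurePreserving_add_left volume x).setLIntegral_comp_emb
    (measurableEmbedding_addLeft x) K (Set.Ioc 0 (2 * Real.pi))
  rw [h2]
  simp [add_comm]

lemma gEnergy_eq_s6 (g : ℂ → ℂ) (hg : ContinuousOn g unitCircle) :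
    gEnergy 2 g = ∫⁻ t in Set.Ico 0 (2 * Real.pi), ∫⁻ x in Set.Ico 0 (2 * Real.pi),
      ENNReal.ofReal (‖g (ee (x + t)) - g (ee x)‖ ^ 2 / ‖ee t - 1‖ ^ 2) := by
  have hG : Continuous fun x => g (ee x) := hg.comp_continuous continuous_ee ee_mem
  have ce := continuous_ee
  have hm := aemeasurable_circle hg
  have hm1 : AEMeasurable (fun q : ℂ × ℂ => g q.1) (circleMeasure.prod circleMeasure) :=
    hm.comp_quasiMeasurePreserving Measure.quasiMeasurePreserving_fst
  have hm2 : AEMeasurable (fun q : ℂ × ℂ => g q.2) (circleMeasure.prod circleMeasure) :=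
    hm.comp_quasiMeasurePreserving Measure.quasiMeasurePreserving_snd
  have hM : AEMeasurable (fun q : ℂ × ℂ =>
      ENNReal.ofReal (‖g q.1 - g q.2‖ ^ 2 / ‖q.1 - q.2‖ ^ 2))
      (circleMeasure.prod circleMeasure) := by
    fun_prop
  have hprod : circleMeasure.prod circleMeasure = Measure.map (Prod.map ee ee)
      ((volume.restrict (Set.Ico 0 (2 * Real.pi))).prod
        (volume.restrict (Set.Ico 0 (2 * Real.pi)))) := by
    rw [circleMeasure_eq_s6, Measure.map_prod_map _ _ ce.measurable ce.measurable]
  rw [gEnergy, gEnergyOn, Measure.restrict_univ]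
  simp only [Real.rpow_two]
  rw [hprod] at hM ⊢
  rw [lintegral_map' hM (ce.prodMap ce).measurable.aemeasurable]
  simp only [Prod.map_fst, Prod.map_snd]
  have hGm := hG.measurable
  have cem := ce.measurable
  rw [lintegral_prod _ (Measurable.aemeasurable (by
    have a1 : Measurable fun z : ℝ × ℝ => g (ee z.1) := hGm.comp measurable_fst
    have a2 : Measurable fun z : ℝ × ℝ => g (ee z.2) := hGm.comp measurable_snd
    have a3 : Measurable fun z : ℝ × ℝ => ee z.1 := cem.comp measurable_fst
    have a4 : Measurable fun z : ℝ × ℝ => ee z.2 := cem.comp measurable_snd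
    exact (((a1.sub a2).norm.pow_const 2).div ((a3.sub a4).norm.pow_const 2)).ennreal_ofReal))]
  refine Eq.trans ?_ (lintegral_lintegral_swap (Measurable.aemeasurable (by
    have a1 : Measurable fun z : ℝ × ℝ => g (ee (z.2 + z.1)) := hGm.comp
      (measurable_snd.add measurable_fst)
    have a2 : Measurable fun z : ℝ × ℝ => g (ee z.2) := hGm.comp measurable_snd
    have a3 : Measurable fun z : ℝ × ℝ => ee z.1 := cem.comp measurable_fst
    exact (((a1.sub a2).norm.pow_const 2).div
      ((a3.sub measurable_const).norm.pow_const 2)).ennreal_ofReal))).symm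
  apply lintegral_congr
  intro x
  rw [lint_shift _ _ x]
  · apply lintegral_congr
    intro t
    rw [norm_sub_rev]
    congr 3
    simp only []
    rw [ee_add, norm_sub_rev, show ee x * ee t - ee x = ee x * (ee t - 1) by ring, norm_mul,
      norm_ee, one_mul]
  · intro y
    simp only [ee_add, ee_two_pi, mul_one]

lemma gEnergy_zpow (d : ℤ) :
    gEnergy 2 (fun z : ℂ => z ^ d) = ENNReal.ofReal ((2 * Real.pi) ^ 2 * |(d:ℝ)|) := by
  have hc : ContinuousOn (fun z : ℂ => z ^ d) unitCircle := by
    apply ContinuousOn.zpow₀ continuousOn_id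
    intro z hz
    left
    intro h
    simp only [id] at h
    simp [unitCircle, h] at hz
  rw [gEnergy_eq_s6 _ hc]
  have : ∀ t x : ℝ, ENNReal.ofReal (‖ee (x + t) ^ d - ee x ^ d‖ ^ 2 / ‖ee t - 1‖ ^ 2)
      = ENNReal.ofReal (‖ee (d * t) - 1‖ ^ 2 / ‖ee t - 1‖ ^ 2) := by
    intro t x
    rw [ee_add, mul_zpow, show ee x ^ d * ee t ^ d - ee x ^ d = ee x ^ d * (ee t ^ d - 1) by ring,
      norm_mul, norm_zpow, norm_ee, one_zpow, one_mul, ee_mul_int]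
  simp only [this, lintegral_const, Measure.restrict_apply_univ, Real.volume_Ico, sub_zero]
  rw [lintegral_mul_const', fejer_lint, ← ENNReal.ofReal_mul (by positivity)]
  · congr 1; ring
  · exact ENNReal.ofReal_ne_top

lemma gEnergy_fourier (g : ℂ → ℂ) (hg : ContinuousOn g unitCircle) :
    gEnergy 2 g = ∑' n : ℤ, ENNReal.ofReal
      ((2 * Real.pi) ^ 2 * (‖fc (fun x => g (ee x)) n‖ ^ 2 * |(n:ℝ)|)) := by
  have hG : Continuous fun x => g (ee x) := hg.comp_continuous continuous_ee ee_mem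
  have hp : Function.Periodic (fun x => g (ee x)) (2 * Real.pi) := by
    intro x; simp [ee_add, ee_two_pi]
  have cem := continuous_ee.measurable
  rw [gEnergy_eq_s6 _ hg]
  have key : ∀ t : ℝ, ∫⁻ x in Set.Ico 0 (2 * Real.pi),
      ENNReal.ofReal (‖g (ee (x + t)) - g (ee x)‖ ^ 2 / ‖ee t - 1‖ ^ 2)
      = ∑' n : ℤ, ENNReal.ofReal (2 * Real.pi * ‖fc (fun x => g (ee x)) n‖ ^ 2) *
        ENNReal.ofReal (‖ee (n * t) - 1‖ ^ 2 / ‖ee t - 1‖ ^ 2) := by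
    intro t
    have hcont : Continuous fun x => ‖g (ee (x + t)) - g (ee x)‖ ^ 2 / ‖ee t - 1‖ ^ 2 := by
      have h2 : Continuous fun x => g (ee (x + t)) := hG.comp (continuous_add_const t)
      exact ((h2.sub hG).norm.pow 2).div_const _
    rw [Measure.restrict_congr_set Ico_ae_eq_Ioc, ← ofReal_integral_eq_lintegral_ofReal,
      ← intervalIntegral.integral_of_le Real.two_pi_pos.le]
    · have hs := parseval _ hG hp t 1
      have hs2 := (hs.mul_left (2 * Real.pi)).mul_right ((‖ee t - 1‖ ^ 2)⁻¹)
      rw [← mul_assoc, mul_inv_cancel₀ Real.two_pi_pos.ne', one_mul] at hs2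
      simp only [one_mul] at hs2
      simp only [div_eq_mul_inv, intervalIntegral.integral_mul_const]
      rw [← hs2.tsum_eq, ENNReal.ofReal_tsum_of_nonneg _ hs2.summable]
      · apply tsum_congr
        intro n
        rw [← ENNReal.ofReal_mul (by positivity)]
        congr 1; ring
      · intro n; positivity
    · exact (intervalIntegrable_iff_integrableOn_Ioc_of_le Real.two_pi_pos.le).1
        (hcont.intervalIntegrable _ _)
    · filter_upwards with x
      positivity
  simp only [key]
  rw [lintegral_tsum]
  · apply tsum_congr
    intro n
    rw [lintegral_const_mul' _ _ ENNReal.ofReal_ne_top, fejer_lint,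
      ← ENNReal.ofReal_mul (by positivity)]
    congr 1; ring
  · intro n
    apply Measurable.aemeasurable
    fun_prop

lemma hasSum_energy (g : ℂ → ℂ) (hg : ContinuousOn g unitCircle) (hf : gEnergy 2 g ≠ ⊤) :
    HasSum (fun n : ℤ => ‖fc (fun x => g (ee x)) n‖ ^ 2 * |(n:ℝ)|)
      ((gEnergy 2 g).toReal / (2 * Real.pi) ^ 2) := by
  have h := gEnergy_fourier g hg
  rw [h] at hf
  have h1 := ENNReal.hasSum_toReal hf
  rw [← ENNReal.tsum_toReal_eq (fun n => ENNReal.ofReal_ne_top), ← h] at h1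
  have h3 := h1.div_const ((2 * Real.pi) ^ 2)
  refine Eq.mp ?_ h3
  congr 1
  funext n
  rw [ENNReal.toReal_ofReal (by positivity)]
  have := Real.pi_ne_zero
  field_simp

end

noncomputable section

lemma ee_re (x : ℝ) : (ee x).re = Real.cos x := Complex.exp_ofReal_mul_I_re x

lemma ee_im (x : ℝ) : (ee x).im = Real.sin x := Complex.exp_ofReal_mul_I_im x

lemma norm_sq_ee_sub_one (x : ℝ) : ‖ee x - 1‖ ^ 2 = 2 - 2 * Real.cos x := by
  rw [← Complex.normSq_eq_norm_sq, Complex.normSq_apply]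
  simp only [Complex.sub_re, Complex.sub_im, ee_re, ee_im, Complex.one_re, Complex.one_im]
  nlinarith [Real.sin_sq_add_cos_sq x]

lemma norm_sq_ee_sub_I (x : ℝ) : ‖ee x - Complex.I‖ ^ 2 = 2 - 2 * Real.sin x := by
  rw [← Complex.normSq_eq_norm_sq, Complex.normSq_apply]
  simp only [Complex.sub_re, Complex.sub_im, ee_re, ee_im, Complex.I_re, Complex.I_im]
  nlinarith [Real.sin_sq_add_cos_sq x]

lemma norm_sq_ee_add_I (x : ℝ) : ‖ee x - -Complex.I‖ ^ 2 = 2 + 2 * Real.sin x := by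
  rw [← Complex.normSq_eq_norm_sq, Complex.normSq_apply]
  simp only [Complex.sub_re, Complex.sub_im, ee_re, ee_im, Complex.I_re, Complex.I_im,
    Complex.neg_re, Complex.neg_im]
  nlinarith [Real.sin_sq_add_cos_sq x]

lemma norm_sq_ee_sub_one_le (x : ℝ) : ‖ee x - 1‖ ^ 2 ≤ 2 * |x| := by
  have h1 : ‖ee x - 1‖ ≤ |x| := by
    have := @Real.norm_exp_I_mul_ofReal_sub_one_le x
    rw [mul_comm] at this
    exact this
  have h2 : ‖ee x - 1‖ ≤ 2 := by
    refine (norm_sub_le _ _).trans ?_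
    rw [norm_ee]; norm_num
  nlinarith [norm_nonneg (ee x - 1)]

lemma abs_sub_sin_le' {x η : ℝ} (h1 : |x| ≤ 1) (h2 : |x| ≤ η) :
    |x - Real.sin x| ≤ η * ‖ee x - 1‖ ^ 2 := by
  have a := Real.abs_sub_sin_le x
  rw [norm_sq_ee_sub_one]
  have b0 := Real.cos_le_one_sub_mul_cos_sq (h1.trans (by linarith [Real.pi_gt_three]))
  have b : x ^ 2 / 6 ≤ 2 - 2 * Real.cos x := by
    have h3 : (1:ℝ) / 8 ≤ 2 / Real.pi ^ 2 := by
      rw [div_le_div_iff₀ (by norm_num) (by positivity)]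
      nlinarith [Real.pi_le_four, Real.pi_pos]
    nlinarith [mul_le_mul_of_nonneg_right h3 (sq_nonneg x)]
  have e : |x| ^ 3 = |x| * x ^ 2 := by rw [← sq_abs x]; ring
  rw [e] at a
  nlinarith [abs_nonneg x, sq_nonneg x, mul_nonneg (sub_nonneg.2 h2) (sq_nonneg x),
    mul_nonneg (abs_nonneg x) (sub_nonneg.2 b), mul_nonneg ((abs_nonneg x).trans h2) (sub_nonneg.2 b)]

/-- A continuous lift over two periods. -/
lemma exists_lift {g : ℂ → ℂ} {d : ℤ} (h : HasDegree g d) :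
    ∃ ψ : ℝ → ℝ, Continuous ψ ∧ (∀ x ∈ Set.Icc 0 (4 * Real.pi), g (ee x) = ee (ψ x)) ∧
      ∀ x ∈ Set.Icc 0 (2 * Real.pi), ψ (x + 2 * Real.pi) = ψ x + 2 * Real.pi * d := by
  obtain ⟨-, -, φ, hc, hl, hd⟩ := h
  have hpi := Real.pi_pos
  have hl' : ∀ θ ∈ Set.Icc 0 (2 * Real.pi), g (ee θ) = ee (φ θ) := hl
  set Φ : ℝ → ℝ := Set.IccExtend Real.two_pi_pos.le (Set.domRestrict _ φ) with hΦ
  have hΦc : Continuous Φ := (continuousOn_iff_continuous_domRestrict.1 hc).Icc_extend'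
  have hΦe : ∀ x ∈ Set.Icc 0 (2 * Real.pi), Φ x = φ x := by
    intro x hx
    rw [hΦ, Set.IccExtend_of_mem _ _ hx]
    rfl
  refine ⟨fun x => if x ≤ 2 * Real.pi then Φ x else Φ (x - 2 * Real.pi) + 2 * Real.pi * d,
    ?_, ?_, ?_⟩
  · apply Continuous.if_le hΦc (by fun_prop) continuous_id continuous_const
    intro x hx
    simp only [id] at hx
    rw [hx, sub_self, hΦe _ ⟨by positivity, le_rfl⟩, hΦe _ ⟨le_rfl, by positivity⟩]
    linarith
  · intro x hx
    by_cases hx2 : x ≤ 2 * Real.pi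
    · simp only [hx2, if_true]
      rw [hΦe _ ⟨hx.1, hx2⟩, hl' _ ⟨hx.1, hx2⟩]
    · simp only [hx2, if_false]
      have hm : x - 2 * Real.pi ∈ Set.Icc 0 (2 * Real.pi) :=
        ⟨by linarith, by linarith [hx.2]⟩
      rw [hΦe _ hm, ee_add, ← hl' _ hm, mul_comm (2 * Real.pi), ee_int, mul_one]
      congr 1
      have := ee_add (x - 2 * Real.pi) (2 * Real.pi)
      rw [ee_two_pi, mul_one, sub_add_cancel] at this
      exact this
  · intro x hx
    rcases hx.1.eq_or_lt with h0 | h0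
    · subst h0
      simp only [zero_add, le_refl, if_true, Real.two_pi_pos.le]
      rw [hΦe _ ⟨by positivity, le_rfl⟩, hΦe _ ⟨le_rfl, by positivity⟩]
      linarith
    · have : ¬ (x + 2 * Real.pi ≤ 2 * Real.pi) := by linarith
      simp only [this, if_false, hx.2, if_true, add_sub_cancel_right]

lemma deg_bound_aux {g : ℂ → ℂ} {d : ℤ} (h : HasDegree g d) (hf : gEnergy 2 g ≠ ⊤)
    {η : ℝ} (hη : 0 < η) :
    |(d:ℝ)| ≤ (gEnergy 2 g).toReal / (2 * Real.pi) ^ 2 * (1 + 2 * η) := by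
  have hg := h.1
  have hG : Continuous fun x => g (ee x) := hg.comp_continuous continuous_ee ee_mem
  have hp : Function.Periodic (fun x => g (ee x)) (2 * Real.pi) := by
    intro x; simp [ee_add, ee_two_pi]
  have hS := hasSum_energy g hg hf
  set S := (gEnergy 2 g).toReal / (2 * Real.pi) ^ 2
  obtain ⟨ψ, hψ, hlift, hquasi⟩ := exists_lift h
  have hpi := Real.pi_pos
  -- choose the shift
  have huc : UniformContinuousOn ψ (Set.Icc 0 (4 * Real.pi)) :=
    isCompact_Icc.uniformContinuousOn_of_continuous hψ.continuousOn
  rw [Metric.uniformContinuousOn_iff] at huc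
  obtain ⟨δ, hδ, huc⟩ := huc (min η 1) (lt_min hη one_pos)
  obtain ⟨t, ht0, htδ, ht2⟩ : ∃ t : ℝ, 0 < t ∧ t < δ ∧ t ≤ 2 * Real.pi := by
    refine ⟨min (δ / 2) (2 * Real.pi), lt_min (by linarith) (by linarith), ?_, min_le_right _ _⟩
    exact (min_le_left _ _).trans_lt (by linarith)
  set D : ℝ → ℝ := fun x => ψ (x + t) - ψ x with hD
  have hDc : Continuous D := by fun_prop
  have hDs : ∀ x ∈ Set.Icc 0 (2 * Real.pi), |D x| ≤ min η 1 := by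
    intro x hx
    have := huc (x + t) ⟨by linarith [hx.1], by linarith [hx.2]⟩ x ⟨hx.1, by linarith [hx.2]⟩
      (by rw [Real.dist_eq, add_sub_cancel_left, abs_of_pos ht0]; exact htδ)
    rw [Real.dist_eq] at this
    exact this.le
  have hnorm : ∀ c : ℂ, ∀ x ∈ Set.Icc 0 (2 * Real.pi),
      ‖g (ee (x + t)) - c * g (ee x)‖ = ‖ee (D x) - c‖ := by
    intro c x hx
    rw [hlift _ ⟨by linarith [hx.1], by linarith [hx.2]⟩, hlift _ ⟨hx.1, by linarith [hx.2]⟩]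
    have : ee (ψ (x + t)) = ee (D x) * ee (ψ x) := by
      rw [← ee_add]; simp [hD]
    rw [this, ← sub_mul, norm_mul, norm_ee, mul_one]
  have hP : ∀ c : ℂ, HasSum (fun n : ℤ => ‖fc (fun x => g (ee x)) n‖ ^ 2 * ‖ee (n * t) - c‖ ^ 2)
      ((2 * Real.pi)⁻¹ * ∫ x in (0:ℝ)..(2 * Real.pi), ‖ee (D x) - c‖ ^ 2) := by
    intro c
    have := parseval _ hG hp t c
    convert this using 2
    apply intervalIntegral.integral_congr
    intro x hx
    rw [Set.uIcc_of_le Real.two_pi_pos.le] at hx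
    simp only
    rw [hnorm c x hx]
  -- (A)
  have hA : ∫ x in (0:ℝ)..(2 * Real.pi), D x = 2 * Real.pi * d * t := by
    have hi : ∀ a b, IntervalIntegrable ψ volume a b := fun a b => hψ.intervalIntegrable a b
    have h1 : ∫ x in (0:ℝ)..(2 * Real.pi), ψ (x + t) = ∫ x in t..(2 * Real.pi + t), ψ x := by
      rw [intervalIntegral.integral_comp_add_right]; simp
    have h2 : ∫ x in (2 * Real.pi)..(2 * Real.pi + t), ψ x = ∫ x in (0:ℝ)..t, (ψ x + 2 * Real.pi * d) := by
      have : ∫ x in (0:ℝ)..t, ψ (x + 2 * Real.pi) = ∫ x in (2 * Real.pi)..(2 * Real.pi + t), ψ x := by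
        rw [intervalIntegral.integral_comp_add_right]; simp [add_comm]
      rw [← this]
      apply intervalIntegral.integral_congr
      intro x hx
      rw [Set.uIcc_of_le ht0.le] at hx
      exact hquasi x ⟨hx.1, hx.2.trans ht2⟩
    rw [intervalIntegral.integral_add (hi _ _) (by simp)] at h2
    rw [intervalIntegral.integral_const, smul_eq_mul, sub_zero] at h2
    rw [hD, intervalIntegral.integral_sub
      (Continuous.intervalIntegrable (by fun_prop) _ _) (hi _ _), h1]
    have h3 := intervalIntegral.integral_add_adjacent_intervals (hi 0 t) (hi t (2 * Real.pi + t))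
    have h4 := intervalIntegral.integral_add_adjacent_intervals (hi 0 (2 * Real.pi))
      (hi (2 * Real.pi) (2 * Real.pi + t))
    linarith
  have cD := continuous_ee.comp hDc
  simp only [Function.comp_def] at cD
  -- (B)
  have hB : |∫ x in (0:ℝ)..(2 * Real.pi), Real.sin (D x)| ≤ 2 * Real.pi * (S * t) := by
    have h1 := (hP (-Complex.I)).sub (hP Complex.I)
    rw [← mul_sub, ← intervalIntegral.integral_sub
      (Continuous.intervalIntegrable (by fun_prop) _ _)
      (Continuous.intervalIntegrable (by fun_prop) _ _)] at h1
    simp only [norm_sq_ee_add_I, norm_sq_ee_sub_I] at h1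
    have e : ∀ y : ℝ, 2 + 2 * y - (2 - 2 * y) = 4 * y := fun y => by ring
    simp only [← mul_sub, e, intervalIntegral.integral_const_mul] at h1
    have h2 := hS.mul_right (4 * t)
    have b : ∀ n : ℤ, |Real.sin (n * t)| ≤ |(n:ℝ)| * t := by
      intro n
      refine Real.abs_sin_le_abs.trans ?_
      rw [abs_mul, abs_of_pos ht0]
    have u1 := hasSum_le (fun n : ℤ => by
      have := (abs_le.1 (b n)).2
      have h0 := sq_nonneg ‖fc (fun x => g (ee x)) n‖
      show ‖fc (fun x => g (ee x)) n‖ ^ 2 * (4 * Real.sin (n * t))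
        ≤ ‖fc (fun x => g (ee x)) n‖ ^ 2 * |(n:ℝ)| * (4 * t)
      nlinarith) h1 h2
    have u2 := hasSum_le (fun n : ℤ => by
      have := (abs_le.1 (b n)).1
      have h0 := sq_nonneg ‖fc (fun x => g (ee x)) n‖
      show -(‖fc (fun x => g (ee x)) n‖ ^ 2 * (4 * Real.sin (n * t)))
        ≤ ‖fc (fun x => g (ee x)) n‖ ^ 2 * |(n:ℝ)| * (4 * t)
      nlinarith) h1.neg h2
    set J := ∫ x in (0:ℝ)..(2 * Real.pi), Real.sin (D x)
    have hJ : J = 2 * Real.pi * ((2 * Real.pi)⁻¹ * J) := by field_simp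
    rw [abs_le, hJ]
    constructor <;> nlinarith
  -- (C)
  have hC : ∫ x in (0:ℝ)..(2 * Real.pi), ‖ee (D x) - 1‖ ^ 2 ≤ 2 * Real.pi * (2 * (S * t)) := by
    have h2 := hS.mul_right (2 * t)
    have u1 := hasSum_le (fun n : ℤ => by
      have b := norm_sq_ee_sub_one_le (n * t)
      rw [abs_mul, abs_of_pos ht0] at b
      have h0 := sq_nonneg ‖fc (fun x => g (ee x)) n‖
      show ‖fc (fun x => g (ee x)) n‖ ^ 2 * ‖ee (n * t) - 1‖ ^ 2
        ≤ ‖fc (fun x => g (ee x)) n‖ ^ 2 * |(n:ℝ)| * (2 * t)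
      nlinarith) (hP 1) h2
    set J := ∫ x in (0:ℝ)..(2 * Real.pi), ‖ee (D x) - 1‖ ^ 2
    have hJ : J = 2 * Real.pi * ((2 * Real.pi)⁻¹ * J) := by field_simp
    rw [hJ]
    nlinarith
  -- (D)
  have hDD : |∫ x in (0:ℝ)..(2 * Real.pi), (D x - Real.sin (D x))|
      ≤ η * (2 * Real.pi * (2 * (S * t))) := by
    refine (intervalIntegral.abs_integral_le_integral_abs Real.two_pi_pos.le).trans ?_
    refine le_trans ?_ (mul_le_mul_of_nonneg_left hC hη.le)
    rw [← intervalIntegral.integral_const_mul]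
    apply intervalIntegral.integral_mono_on Real.two_pi_pos.le
      (Continuous.intervalIntegrable (by fun_prop) _ _)
      (Continuous.intervalIntegrable (by fun_prop) _ _)
    intro x hx
    have := hDs x hx
    exact abs_sub_sin_le' (this.trans (min_le_right _ _)) (this.trans (min_le_left _ _))
  rw [intervalIntegral.integral_sub (Continuous.intervalIntegrable (by fun_prop) _ _)
      (Continuous.intervalIntegrable (by fun_prop) _ _), hA] at hDD
  have hfin : |2 * Real.pi * d * t| ≤ η * (2 * Real.pi * (2 * (S * t))) + 2 * Real.pi * (S * t) := by
    have := abs_sub_abs_le_abs_sub (2 * Real.pi * d * t) (∫ x in (0:ℝ)..(2 * Real.pi), Real.sin (D x))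
    linarith
  rw [abs_mul, abs_mul, abs_of_pos Real.two_pi_pos, abs_of_pos ht0] at hfin
  have hpt : 0 < 2 * Real.pi * t := by positivity
  by_contra hcon
  push Not at hcon
  nlinarith

lemma deg_bound {g : ℂ → ℂ} {d : ℤ} (h : HasDegree g d) (hf : gEnergy 2 g ≠ ⊤) :
    (2 * Real.pi) ^ 2 * |(d:ℝ)| ≤ (gEnergy 2 g).toReal := by
  have hpi : 0 < (2 * Real.pi) ^ 2 := by positivity
  have key : |(d:ℝ)| ≤ (gEnergy 2 g).toReal / (2 * Real.pi) ^ 2 := by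
    set S := (gEnergy 2 g).toReal / (2 * Real.pi) ^ 2 with hSdef
    have hS0 : 0 ≤ S := by positivity
    apply le_of_forall_pos_le_add
    intro ε hε
    have := deg_bound_aux h hf (η := ε / (2 * (S + 1))) (by positivity)
    refine this.trans ?_
    rw [← hSdef]
    have : S * (1 + 2 * (ε / (2 * (S + 1)))) = S + ε * (S / (S + 1)) := by field_simp
    rw [this]
    have : S / (S + 1) ≤ 1 := by rw [div_le_one (by positivity)]; linarith
    nlinarith
  rw [le_div_iff₀ hpi] at key
  linarith

end

noncomputable section

/-- The difference quotient whose `L²` norm is the Gagliardo seminorm. -/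
def dq (f : ℂ → ℂ) (q : ℂ × ℂ) : ℂ := (f q.1 - f q.2) / (‖q.1 - q.2‖ : ℂ)

lemma aesm_dq {f : ℂ → ℂ} (hf : AEMeasurable f circleMeasure) :
    AEStronglyMeasurable (dq f) (circleMeasure.prod circleMeasure) := by
  have hm1 : AEMeasurable (fun q : ℂ × ℂ => f q.1) (circleMeasure.prod circleMeasure) :=
    hf.comp_quasiMeasurePreserving Measure.quasiMeasurePreserving_fst
  have hm2 : AEMeasurable (fun q : ℂ × ℂ => f q.2) (circleMeasure.prod circleMeasure) :=
    hf.comp_quasiMeasurePreserving Measure.quasiMeasurePreserving_snd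
  apply AEMeasurable.aestronglyMeasurable
  unfold dq
  fun_prop

lemma gEnergy_eq_dq (f : ℂ → ℂ) :
    gEnergy 2 f = ∫⁻ q, ‖dq f q‖ₑ ^ (2:ℝ) ∂(circleMeasure.prod circleMeasure) := by
  rw [gEnergy, gEnergyOn, Measure.restrict_univ]
  apply lintegral_congr
  intro q
  rw [← ofReal_norm, ENNReal.ofReal_rpow_of_nonneg (norm_nonneg _) (by norm_num)]
  congr 1
  simp [dq, div_pow]

lemma eLpNorm_dq (f : ℂ → ℂ) :
    eLpNorm (dq f) 2 (circleMeasure.prod circleMeasure) = (gEnergy 2 f) ^ ((1:ℝ) / 2) := by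
  rw [gEnergy_eq_dq, eLpNorm_eq_lintegral_rpow_enorm_toReal (by norm_num) (by norm_num)]
  simp

lemma gSeminorm_eq_s6 (f : ℂ → ℂ) :
    gSeminorm 2 f = (eLpNorm (dq f) 2 (circleMeasure.prod circleMeasure)).toReal := by
  rw [eLpNorm_dq, gSeminorm, ENNReal.toReal_rpow]

lemma eLpNorm_dq_ne_top {f : ℂ → ℂ} (h : gEnergy 2 f ≠ ⊤) :
    eLpNorm (dq f) 2 (circleMeasure.prod circleMeasure) ≠ ⊤ := by
  rw [eLpNorm_dq]
  exact ENNReal.rpow_ne_top_of_nonneg (by norm_num) h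

lemma gSeminorm_triangle {f g : ℂ → ℂ} (hf : AEMeasurable f circleMeasure)
    (hg : AEMeasurable g circleMeasure) (hfe : gEnergy 2 f ≠ ⊤) (hge : gEnergy 2 g ≠ ⊤) :
    gSeminorm 2 g ≤ gSeminorm 2 f + gSeminorm 2 (fun x => f x - g x) := by
  have e1 : dq (fun x => f x - g x) = dq f - dq g := by
    ext q
    simp only [dq, Pi.sub_apply]
    ring
  have e2 : dq g = dq f - dq (fun x => f x - g x) := by
    rw [e1]; simp
  have m1 := aesm_dq hf
  have m2 := aesm_dq hg
  have m3 := aesm_dq (hf.sub hg)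
  have t1 := eLpNorm_dq_ne_top hfe
  have t2 := eLpNorm_dq_ne_top hge
  have t3 : eLpNorm (dq (fun x => f x - g x)) 2 (circleMeasure.prod circleMeasure) ≠ ⊤ := by
    rw [e1]
    exact ne_top_of_le_ne_top (ENNReal.add_ne_top.2 ⟨t1, t2⟩)
      (eLpNorm_sub_le m1 m2 (by norm_num))
  simp only [gSeminorm_eq_s6]
  rw [← ENNReal.toReal_add t1 t3]
  apply ENNReal.toReal_mono (ENNReal.add_ne_top.2 ⟨t1, t3⟩)
  conv_lhs => rw [e2]
  exact eLpNorm_sub_le m1 m3 (by norm_num)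

lemma sqrt_form (d : ℝ) (E : ℝ) (hE : (2 * Real.pi) ^ 2 * |d| = E) :
    E ^ ((1:ℝ) / 2) = 2 * Real.pi * |d| ^ ((1:ℝ) / 2) := by
  rw [← hE, Real.mul_rpow (by positivity) (abs_nonneg _), ← Real.sqrt_eq_rpow,
    Real.sqrt_sq (by positivity)]

lemma hasDegree_zpow (d : ℤ) : HasDegree (fun z : ℂ => z ^ d) d := by
  refine ⟨?_, ?_, fun θ => d * θ, by fun_prop, ?_, ?_⟩
  · apply ContinuousOn.zpow₀ continuousOn_id
    intro z hz
    left
    intro h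
    simp only [id] at h
    simp [unitCircle, h] at hz
  · intro z hz
    simp only [unitCircle, mem_sphere_iff_norm, sub_zero] at hz ⊢
    rw [norm_zpow, hz, one_zpow]
  · intro θ _
    exact (ee_mul_int d θ).symm
  · ring

lemma zpow_mem_classE (d : ℤ) : (fun z : ℂ => z ^ d) ∈ classE 2 d := by
  have hd := hasDegree_zpow d
  have he : gEnergy 2 (fun z : ℂ => z ^ d) ≠ ⊤ := by
    rw [gEnergy_zpow]; exact ENNReal.ofReal_ne_top
  refine ⟨aemeasurable_circle hd.1, ?_, he, fun _ z => z ^ d, fun _ => ⟨hd, he⟩, ?_, ?_⟩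
  · filter_upwards [ae_mem_unitCircle] with z hz
    simpa [unitCircle] using hd.2.1 z hz
  · simp
  · simp [gSeminorm, gEnergy, gEnergyOn]

lemma gSeminorm_zpow (d : ℤ) :
    gSeminorm 2 (fun z : ℂ => z ^ d) = 2 * Real.pi * |(d:ℝ)| ^ ((1 : ℝ) / 2) := by
  rw [gSeminorm, gEnergy_zpow, ENNReal.toReal_ofReal (by positivity)]
  exact sqrt_form _ _ rfl

lemma classE_bound {d : ℤ} {f : ℂ → ℂ} (hf : f ∈ classE 2 d) :
    2 * Real.pi * |(d:ℝ)| ^ ((1 : ℝ) / 2) ≤ gSeminorm 2 f := by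
  obtain ⟨hm, -, he, g, hg, -, hlim⟩ := hf
  have h1 : ∀ k, 2 * Real.pi * |(d:ℝ)| ^ ((1 : ℝ) / 2)
      ≤ gSeminorm 2 f + gSeminorm 2 (fun x => f x - g k x) := by
    intro k
    refine le_trans ?_ (gSeminorm_triangle hm (aemeasurable_circle (hg k).1.1) he (hg k).2)
    rw [← sqrt_form _ _ rfl, gSeminorm]
    exact Real.rpow_le_rpow (by positivity) (deg_bound (hg k).1 (hg k).2) (by norm_num)
  have h2 := hlim.const_add (gSeminorm 2 f)
  rw [add_zero] at h2
  exact ge_of_tendsto' h2 h1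

end

/-- **Minimal energy for p = 2.** `σ_2(d) = 2π |d|^{1/2}`, and the infimum is
attained by the map `z ↦ z^d`. -/
theorem sigma_two_eq (d : ℤ) :
    sigmaP 2 d = 2 * Real.pi * (|d| : ℝ) ^ ((1 : ℝ) / 2) ∧
    (fun z : ℂ => z ^ d) ∈ classE 2 d ∧
    gSeminorm 2 (fun z : ℂ => z ^ d) = 2 * Real.pi * (|d| : ℝ) ^ ((1 : ℝ) / 2) := by
  refine ⟨?_, zpow_mem_classE d, gSeminorm_zpow d⟩
  apply IsLeast.csInf_eq
  refine ⟨⟨_, zpow_mem_classE d, gSeminorm_zpow d⟩, ?_⟩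
  rintro _ ⟨f, hf, rfl⟩
  exact classE_bound hf
end

section
/- Let ε ∈ (0, π/2) and let z1, z2, w1, w2 ∈ S^1 be such that either both products z1·conjugate(w1) and z2·conjugate(w2) lie in the open arc A(ε, π−ε), or both lie in the open arc A(π+ε, 2π−ε). Then |(z1 − w1) − (z2 − w2)|^2 ≥ (sin^2 ε)·max{|z1 − z2|^2, |w1 − w2|^2}. -/
/-- The open arc `A(a,b) = {e^{iθ} : θ ∈ (a,b)}` of the unit circle. -/
def arcIoo (a b : ℝ) : Set ℂ :=
  (fun θ : ℝ => Complex.exp (θ * Complex.I)) '' Set.Ioo a b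

lemma chord_key (s A D B E : ℝ) (hs : s ≤ Real.sin (A - B) ^ 2)
    (z1 z2 w1 w2 : ℂ)
    (h1 : z1 = Complex.exp ((A + D : ℝ) * Complex.I))
    (h2 : z2 = Complex.exp ((A - D : ℝ) * Complex.I))
    (h3 : w1 = Complex.exp ((B + E : ℝ) * Complex.I))
    (h4 : w2 = Complex.exp ((B - E : ℝ) * Complex.I)) :
    s * max (‖z1 - z2‖ ^ 2) (‖w1 - w2‖ ^ 2) ≤ ‖(z1 - w1) - (z2 - w2)‖ ^ 2 := by
  have hA := Real.sin_sq_add_cos_sq A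
  have hB := Real.sin_sq_add_cos_sq B
  have hAB := Real.sin_sq_add_cos_sq (A - B)
  have hc := Real.cos_sub A B
  set p := 2 * Real.sin D with hp
  set q := 2 * Real.sin E with hq
  have e1 : ‖z1 - z2‖ ^ 2 = p ^ 2 := by
    rw [← Complex.normSq_eq_norm_sq, Complex.normSq_apply, h1, h2]
    simp only [Complex.sub_re, Complex.sub_im, Complex.exp_ofReal_mul_I_re,
      Complex.exp_ofReal_mul_I_im, Real.cos_add, Real.cos_sub, Real.sin_add, Real.sin_sub]
    rw [hp]
    linear_combination (4 * Real.sin D ^ 2) * hA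
  have e2 : ‖w1 - w2‖ ^ 2 = q ^ 2 := by
    rw [← Complex.normSq_eq_norm_sq, Complex.normSq_apply, h3, h4]
    simp only [Complex.sub_re, Complex.sub_im, Complex.exp_ofReal_mul_I_re,
      Complex.exp_ofReal_mul_I_im, Real.cos_add, Real.cos_sub, Real.sin_add, Real.sin_sub]
    rw [hq]
    linear_combination (4 * Real.sin E ^ 2) * hB
  have e3 : ‖(z1 - w1) - (z2 - w2)‖ ^ 2 = p ^ 2 + q ^ 2 - 2 * p * q * Real.cos (A - B) := by
    rw [← Complex.normSq_eq_norm_sq, Complex.normSq_apply, h1, h2, h3, h4, hc]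
    simp only [Complex.sub_re, Complex.sub_im, Complex.exp_ofReal_mul_I_re,
      Complex.exp_ofReal_mul_I_im, Real.cos_add, Real.cos_sub, Real.sin_add, Real.sin_sub]
    rw [hp, hq]
    linear_combination (4 * Real.sin D ^ 2) * hA + (4 * Real.sin E ^ 2) * hB
  rw [e1, e2, e3]
  rcases max_choice (p ^ 2) (q ^ 2) with h | h <;> rw [h]
  · have := mul_le_mul_of_nonneg_right hs (sq_nonneg p)
    have h5 : Real.sin (A - B) ^ 2 = 1 - Real.cos (A - B) ^ 2 := by linarith
    rw [h5] at this
    linarith [sq_nonneg (q - p * Real.cos (A - B))]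
  · have := mul_le_mul_of_nonneg_right hs (sq_nonneg q)
    have h5 : Real.sin (A - B) ^ 2 = 1 - Real.cos (A - B) ^ 2 := by linarith
    rw [h5] at this
    linarith [sq_nonneg (p - q * Real.cos (A - B))]

lemma chord_sin (ε m : ℝ) (h0 : 0 < ε) (h1 : ε < m) (h2 : m < Real.pi - ε) :
    Real.sin ε ^ 2 ≤ Real.sin m ^ 2 := by
  have a := Real.cos_le_cos_of_nonneg_of_le_pi h0.le (by linarith : m ≤ Real.pi) h1.le
  have b := Real.cos_le_cos_of_nonneg_of_le_pi (by linarith : 0 ≤ m)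
    (by linarith : Real.pi - ε ≤ Real.pi) h2.le
  rw [Real.cos_pi_sub] at b
  rw [Real.sin_sq, Real.sin_sq]
  have := sq_le_sq' b a
  linarith

lemma chord_angles (s t1 t2 : ℝ) (hs : s ≤ Real.sin ((t1 + t2) / 2) ^ 2)
    (z1 z2 w1 w2 : ℂ) (hw1 : ‖w1‖ = 1) (hw2 : ‖w2‖ = 1)
    (h1 : Complex.exp (t1 * Complex.I) = z1 * (starRingEnd ℂ) w1)
    (h2 : Complex.exp (t2 * Complex.I) = z2 * (starRingEnd ℂ) w2) :
    s * max (‖z1 - z2‖ ^ 2) (‖w1 - w2‖ ^ 2) ≤ ‖(z1 - w1) - (z2 - w2)‖ ^ 2 := by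
  have par : ∀ w : ℂ, ‖w‖ = 1 → w = Complex.exp (w.arg * Complex.I) := by
    intro w hw
    have := Complex.norm_mul_exp_arg_mul_I w
    rw [hw] at this
    simpa using this.symm
  have parz : ∀ (z w : ℂ) (t : ℝ), ‖w‖ = 1 →
      Complex.exp (t * Complex.I) = z * (starRingEnd ℂ) w →
      z = Complex.exp ((t + w.arg : ℝ) * Complex.I) := by
    intro z w t hw h
    have h3 : (starRingEnd ℂ) w * w = 1 := by
      rw [mul_comm, Complex.mul_conj, Complex.normSq_eq_norm_sq, hw]; simp
    rw [Complex.ofReal_add, add_mul, Complex.exp_add, h, ← par w hw, mul_assoc, h3, mul_one]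
  have p1 := parz z1 w1 t1 hw1 h1
  have p2 := parz z2 w2 t2 hw2 h2
  have q1 := par w1 hw1
  have q2 := par w2 hw2
  refine chord_key s ((t1 + w1.arg + (t2 + w2.arg)) / 2) ((t1 + w1.arg - (t2 + w2.arg)) / 2)
    ((w1.arg + w2.arg) / 2) ((w1.arg - w2.arg) / 2) ?_ z1 z2 w1 w2 ?_ ?_ ?_ ?_
  · convert hs using 3; ring
  · refine p1.trans ?_; congr 3; ring
  · refine p2.trans ?_; congr 3; ring
  · refine q1.trans ?_; congr 3; ring
  · refine q2.trans ?_; congr 3; ring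

/-- **Lemma 2.2.** Let `ε ∈ (0, π/2)` and let `z₁, z₂, w₁, w₂ ∈ S¹` be such that either
both `z₁·conj w₁` and `z₂·conj w₂` lie in `A(ε, π-ε)`, or both lie in `A(π+ε, 2π-ε)`.
Then `|(z₁ - w₁) - (z₂ - w₂)|² ≥ sin²ε · max{|z₁ - z₂|², |w₁ - w₂|²}`. -/
theorem chord_lemma (ε : ℝ) (hε : ε ∈ Set.Ioo 0 (Real.pi / 2))
    (z1 z2 w1 w2 : ℂ)
    (hz1 : ‖z1‖ = 1) (hz2 : ‖z2‖ = 1) (hw1 : ‖w1‖ = 1) (hw2 : ‖w2‖ = 1)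
    (h : (z1 * (starRingEnd ℂ) w1 ∈ arcIoo ε (Real.pi - ε) ∧
          z2 * (starRingEnd ℂ) w2 ∈ arcIoo ε (Real.pi - ε)) ∨
         (z1 * (starRingEnd ℂ) w1 ∈ arcIoo (Real.pi + ε) (2 * Real.pi - ε) ∧
          z2 * (starRingEnd ℂ) w2 ∈ arcIoo (Real.pi + ε) (2 * Real.pi - ε))) :
    Real.sin ε ^ 2 * max (‖z1 - z2‖ ^ 2) (‖w1 - w2‖ ^ 2) ≤
      ‖(z1 - w1) - (z2 - w2)‖ ^ 2 := by
  rcases h with ⟨⟨t1, ⟨a1, b1⟩, h1⟩, ⟨t2, ⟨a2, b2⟩, h2⟩⟩ | ⟨⟨t1, ⟨a1, b1⟩, h1⟩, ⟨t2, ⟨a2, b2⟩, h2⟩⟩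
  · exact chord_angles _ t1 t2 (chord_sin ε _ hε.1 (by linarith) (by linarith))
      z1 z2 w1 w2 hw1 hw2 h1 h2
  · refine chord_angles _ t1 t2 ?_ z1 z2 w1 w2 hw1 hw2 h1 h2
    have := chord_sin ε ((t1 + t2) / 2 - Real.pi) hε.1 (by linarith) (by linarith)
    rwa [Real.sin_sub_pi, neg_sq] at this
end

section
/- Let k : [0,2π] → ℝ be Lipschitz with Lipschitz constant L and k(0) = k(2π), and define K : S^1 → S^1 by K(e^{iθ}) = e^{i·k(θ)} for θ ∈ [0,2π]. Then K is Lipschitz with constant max{1, L}; that is, |K(x) − K(y)| ≤ max{1, L}·|x − y| for all x, y ∈ S^1. -/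
/-- Concavity estimate: `sin (M u) ≤ M sin u`, in the form needed below. -/
theorem circle_aux_sin (M u v : ℝ) (hM : 1 ≤ M) (hu : 0 ≤ u) (hu2 : u ≤ Real.pi / 2)
    (hv : |v| ≤ M * u) : |Real.sin v| ≤ M * Real.sin u := by
  have hpi := Real.pi_pos
  rcases le_total (Real.pi / 2) (M * u) with h | h
  · have h1 := Real.mul_le_sin hu hu2
    have h2 : 1 ≤ M * (2 / Real.pi * u) := by
      have : M * (2 / Real.pi * u) = (M * u) / (Real.pi / 2) := by field_simp
      rw [this, le_div_iff₀ (by positivity)]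
      linarith
    calc |Real.sin v| ≤ 1 := Real.abs_sin_le_one v
      _ ≤ M * (2 / Real.pi * u) := h2
      _ ≤ M * Real.sin u := by gcongr
  · have h1 : |Real.sin v| ≤ Real.sin (M * u) := by
      have ha : |Real.sin v| = Real.sin |v| := by
        rw [Real.abs_sin_eq_sin_abs_of_abs_le_pi]
        linarith
      rw [ha]
      exact Real.sin_le_sin_of_le_of_le_pi_div_two (by linarith [abs_nonneg v]) h hv
    have m0 : (0 : ℝ) ∈ Set.Icc 0 Real.pi := ⟨le_refl _, hpi.le⟩
    have m1 : M * u ∈ Set.Icc 0 Real.pi := ⟨by positivity, by linarith⟩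
    have w0 : 0 ≤ 1 - 1 / M := by
      rw [sub_nonneg, div_le_one (by linarith)]
      exact hM
    have w1 : 0 ≤ 1 / M := by positivity
    have hc := strictConcaveOn_sin_Icc.concaveOn.2 m0 m1 w0 w1 (by ring)
    have hM0 : M ≠ 0 := by linarith
    have e : 1 / M * (M * u) = u := by field_simp
    simp only [smul_eq_mul, Real.sin_zero, mul_zero, zero_add, e] at hc
    have h3 := mul_le_mul_of_nonneg_left hc (by linarith : (0:ℝ) ≤ M)
    have e2 : M * (1 / M * Real.sin (M * u)) = Real.sin (M * u) := by field_simp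
    linarith

theorem circle_aux_chord (a b : ℝ) :
    ‖Complex.exp (a * Complex.I) - Complex.exp (b * Complex.I)‖
      = 2 * |Real.sin ((b - a) / 2)| := by
  have h : Complex.exp (a * Complex.I) - Complex.exp (b * Complex.I)
      = -(Complex.exp (a * Complex.I) * (Complex.exp (Complex.I * ((b - a : ℝ) : ℂ)) - 1)) := by
    rw [mul_sub, ← Complex.exp_add]
    push_cast
    ring_nf
  rw [h, norm_neg, norm_mul, Complex.norm_exp_ofReal_mul_I, one_mul,
    Complex.norm_exp_I_mul_ofReal_sub_one, norm_mul, Real.norm_eq_abs, Real.norm_eq_abs]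
  norm_num

theorem circle_aux_param (x : ℂ) (hx : ‖x‖ = 1) :
    ∃ θ ∈ Set.Icc 0 (2 * Real.pi), Complex.exp (((θ : ℝ) : ℂ) * Complex.I) = x := by
  have h := Complex.norm_mul_exp_arg_mul_I x
  rw [hx, Complex.ofReal_one, one_mul] at h
  have h1 := Complex.neg_pi_lt_arg x
  have h2 := Complex.arg_le_pi x
  have hpi := Real.pi_pos
  rcases le_total 0 x.arg with h0 | h0
  · exact ⟨x.arg, ⟨h0, by linarith⟩, h⟩
  · refine ⟨x.arg + 2 * Real.pi, ⟨by linarith, by linarith⟩, ?_⟩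
    push_cast
    rw [add_mul, Complex.exp_add, h, Complex.exp_two_pi_mul_I, mul_one]

/-- **Lemma 2.3.** Let `k : [0, 2π] → ℝ` be Lipschitz with constant `L` and
`k(0) = k(2π)`, and define `K : S¹ → S¹` by `K(e^{iθ}) = e^{i k(θ)}`. Then `K`
is Lipschitz (for the chordal distance) with constant `max{1, L}`. -/
theorem circle_map_lipschitz (L : ℝ) (hL : 0 ≤ L) (k : ℝ → ℝ)
    (hk : ∀ s ∈ Set.Icc 0 (2 * Real.pi), ∀ t ∈ Set.Icc 0 (2 * Real.pi),
      |k s - k t| ≤ L * |s - t|)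
    (hper : k 0 = k (2 * Real.pi))
    (K : ℂ → ℂ)
    (hK : ∀ θ ∈ Set.Icc 0 (2 * Real.pi),
      K (Complex.exp (θ * Complex.I)) = Complex.exp ((k θ : ℂ) * Complex.I)) :
    ∀ x y : ℂ, ‖x‖ = 1 → ‖y‖ = 1 → ‖K x - K y‖ ≤ max 1 L * ‖x - y‖ := by
  have key : ∀ s ∈ Set.Icc 0 (2 * Real.pi), ∀ t ∈ Set.Icc 0 (2 * Real.pi), s ≤ t →
      |Real.sin ((k t - k s) / 2)| ≤ max 1 L * |Real.sin ((t - s) / 2)| := by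
    intro s hs t ht hst
    have hpi := Real.pi_pos
    have hM : L ≤ max 1 L := le_max_right _ _
    have h1M : 1 ≤ max 1 L := le_max_left _ _
    have h0 : |(k t - k s) / 2| = |k t - k s| / 2 := by rw [abs_div]; norm_num
    rw [abs_of_nonneg (Real.sin_nonneg_of_nonneg_of_le_pi (x := (t - s) / 2)
      (by linarith) (by linarith [hs.1, ht.2]))]
    rcases le_total ((t - s) / 2) (Real.pi / 2) with h | h
    · refine circle_aux_sin _ _ _ h1M (by linarith) h ?_
      have := hk t ht s hs
      rw [abs_of_nonneg (sub_nonneg.2 hst)] at this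
      have h2 := mul_le_mul_of_nonneg_right hM (sub_nonneg.2 hst)
      rw [h0]
      linarith
    · rw [← Real.sin_pi_sub ((t - s) / 2)]
      refine circle_aux_sin _ _ _ h1M (by linarith [hs.1, ht.2]) (by linarith) ?_
      have a1 := hk t ht (2 * Real.pi) ⟨by linarith, le_refl _⟩
      have a2 := hk 0 ⟨le_refl _, by linarith⟩ s hs
      rw [abs_of_nonpos (by linarith [ht.2] : t - 2 * Real.pi ≤ 0)] at a1
      rw [abs_of_nonpos (by linarith [hs.1] : 0 - s ≤ 0), hper] at a2
      have a3 := abs_sub_le (k t) (k (2 * Real.pi)) (k s)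
      have h2 := mul_le_mul_of_nonneg_right hM
        (by linarith [hs.1, ht.2] : 0 ≤ Real.pi - (t - s) / 2)
      rw [h0]
      linarith
  intro x y hx hy
  obtain ⟨s, hs, rfl⟩ := circle_aux_param x hx
  obtain ⟨t, ht, rfl⟩ := circle_aux_param y hy
  rw [hK s hs, hK t ht]
  rcases le_total s t with h | h
  · rw [circle_aux_chord, circle_aux_chord]
    linarith [key s hs t ht h]
  · rw [norm_sub_rev, norm_sub_rev (Complex.exp (s * Complex.I)),
      circle_aux_chord, circle_aux_chord]
    linarith [key t ht s hs h]
end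

section
/- For every a ≥ 0 there exists a constant κ_a > 0 such that for every measurable subset A ⊆ S^1, ∬_{A×A} |x − y|^a dσ(x) dσ(y) ≥ κ_a·σ(A)^{a+2}. -/
open MeasureTheory
open scoped ENNReal

lemma circ_chord_aux (v : ℝ) (hv : |v| ≤ Real.pi) (r : ℝ)
    (h : ‖Complex.exp (Complex.I * (v : ℂ)) - 1‖ < r) : |v| < Real.pi * r / 2 := by
  rw [Complex.norm_exp_I_mul_ofReal_sub_one, Real.norm_eq_abs, abs_mul, abs_two] at h
  have hpi := Real.pi_pos
  have h1 := Real.mul_abs_le_abs_sin (x := v / 2) (by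
    rw [abs_div, abs_two]; linarith)
  rw [abs_div, abs_two] at h1
  have h2 : 2 / Real.pi * |v| < r := by linarith
  rw [div_mul_eq_mul_div, div_lt_iff₀ hpi] at h2
  linarith

lemma circ_meas_exp : Measurable (fun θ : ℝ => Complex.exp (θ * Complex.I)) := by
  fun_prop

lemma circ_ball_le (x : ℂ) (hx : x ∈ unitCircle) (r : ℝ) :
    circleMeasure (Metric.ball x r) ≤ ENNReal.ofReal (2 * Real.pi * r) := by
  have hpi := Real.pi_pos
  by_cases hr : r ≤ 0
  · rw [Metric.ball_eq_empty.2 hr]; simp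
  push Not at hr
  have hx1 : ‖x‖ = 1 := by simpa [unitCircle] using hx
  have hx2 : Complex.exp (x.arg * Complex.I) = x := by
    have := Complex.norm_mul_exp_arg_mul_I x
    simpa [hx1] using this
  have h1 := Complex.neg_pi_lt_arg x
  have h2 := Complex.arg_le_pi x
  set φ := x.arg with hφ
  have key : ∀ v : ℝ, ‖Complex.exp ((φ + v : ℝ) * Complex.I) - x‖
      = ‖Complex.exp (Complex.I * (v : ℂ)) - 1‖ := by
    intro v
    have : Complex.exp ((φ + v : ℝ) * Complex.I) - x
        = x * (Complex.exp (Complex.I * (v : ℂ)) - 1) := by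
      push_cast
      rw [add_mul, Complex.exp_add, hx2, mul_comm Complex.I]; ring
    rw [this, norm_mul, hx1, one_mul]
  rw [circleMeasure, Measure.map_apply circ_meas_exp Metric.isOpen_ball.measurableSet,
    Measure.restrict_apply (circ_meas_exp Metric.isOpen_ball.measurableSet)]
  calc _ ≤ volume (Metric.ball φ (Real.pi * r / 2) ∪
        Metric.ball (φ + 2 * Real.pi) (Real.pi * r / 2)) := by
        apply measure_mono
        rintro θ ⟨hθ, h0, h3⟩
        rw [Set.mem_preimage, Metric.mem_ball, dist_eq_norm] at hθ
        by_cases hc : θ - φ ≤ Real.pi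
        · left
          rw [Metric.mem_ball, Real.dist_eq]
          refine circ_chord_aux _ (abs_le.2 ⟨by linarith, hc⟩) r ?_
          rw [← key, add_sub_cancel]
          exact hθ
        · right
          push Not at hc
          rw [Metric.mem_ball, Real.dist_eq]
          refine circ_chord_aux _ (abs_le.2 ⟨by linarith, by linarith⟩) r ?_
          have he : Complex.exp ((φ + (θ - (φ + 2 * Real.pi)) : ℝ) * Complex.I)
              = Complex.exp (θ * Complex.I) := by
            rw [← Complex.exp_periodic ((φ + (θ - (φ + 2 * Real.pi)) : ℝ) * Complex.I)]
            congr 1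
            push_cast
            ring
          rw [← key, he]
          exact hθ
    _ ≤ _ := measure_union_le _ _
    _ = _ := by
        rw [Real.volume_ball, Real.volume_ball,
          ← ENNReal.ofReal_add (by positivity) (by positivity)]
        congr 1; ring

instance circ_finite : IsFiniteMeasure circleMeasure := by
  unfold circleMeasure; infer_instance

/-- For every `a ≥ 0` there is `κ_a > 0` such that
`∬_{A×A} |x - y|^a dσ(x) dσ(y) ≥ κ_a σ(A)^{a+2}` for every measurable `A ⊆ S¹`. -/
theorem double_integral_lower_bound_circle (a : ℝ) (ha : 0 ≤ a) :
    ∃ κ : ℝ, 0 < κ ∧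
      ∀ A : Set ℂ, A ⊆ unitCircle → MeasurableSet A →
        ENNReal.ofReal (κ * (circleMeasure A).toReal ^ (a + 2)) ≤
          ∫⁻ q in A ×ˢ A, ENNReal.ofReal (‖q.1 - q.2‖ ^ a)
            ∂(circleMeasure.prod circleMeasure) := by
  have hpi := Real.pi_pos
  refine ⟨1 / 2 * (1 / (4 * Real.pi)) ^ a, by positivity, fun A hA hAm => ?_⟩
  set s := (circleMeasure A).toReal with hs
  have hs0 : 0 ≤ s := ENNReal.toReal_nonneg
  have hsA : circleMeasure A = ENNReal.ofReal s :=
    (ENNReal.ofReal_toReal (measure_ne_top _ _)).symm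
  set r := s / (4 * Real.pi) with hr
  have hr0 : 0 ≤ r := by positivity
  have inner : ∀ x ∈ A, ENNReal.ofReal (r ^ a * (s / 2)) ≤
      ∫⁻ y in A, ENNReal.ofReal (‖x - y‖ ^ a) ∂circleMeasure := by
    intro x hx
    have hb := circ_ball_le x (hA hx) r
    have hb' : 2 * Real.pi * r = s / 2 := by rw [hr]; field_simp; ring
    rw [hb'] at hb
    have hd : ENNReal.ofReal (s / 2) ≤ circleMeasure (A \ Metric.ball x r) := by
      have h1 : ENNReal.ofReal s - ENNReal.ofReal (s / 2) ≤
          circleMeasure (A \ Metric.ball x r) := by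
        rw [← hsA]
        exact (tsub_le_tsub_left hb _).trans le_measure_sdiff
      rw [← ENNReal.ofReal_sub _ (by positivity)] at h1
      convert h1 using 2; ring
    calc _ = ENNReal.ofReal (r ^ a) * ENNReal.ofReal (s / 2) :=
          ENNReal.ofReal_mul (by positivity)
      _ ≤ ENNReal.ofReal (r ^ a) * circleMeasure (A \ Metric.ball x r) := by gcongr
      _ = ∫⁻ y in A \ Metric.ball x r, ENNReal.ofReal (r ^ a) ∂circleMeasure := by
          rw [setLIntegral_const]
      _ ≤ ∫⁻ y in A \ Metric.ball x r, ENNReal.ofReal (‖x - y‖ ^ a) ∂circleMeasure := by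
          refine setLIntegral_mono' (hAm.diff Metric.isOpen_ball.measurableSet) ?_
          rintro y ⟨-, hy⟩
          rw [Metric.mem_ball, not_lt, dist_comm, dist_eq_norm] at hy
          exact ENNReal.ofReal_le_ofReal (Real.rpow_le_rpow hr0 hy ha)
      _ ≤ _ := lintegral_mono_set Set.sdiff_subset
  have hmeas : Measurable fun q : ℂ × ℂ => ENNReal.ofReal (‖q.1 - q.2‖ ^ a) := by
    fun_prop
  rw [← Measure.prod_restrict, lintegral_prod _ hmeas.aemeasurable]
  calc _ = ENNReal.ofReal (r ^ a * (s / 2)) * circleMeasure A := by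
        rw [hsA, ← ENNReal.ofReal_mul (by positivity)]
        congr 1
        rw [hr, div_eq_mul_one_div s, Real.mul_rpow hs0 (by positivity),
          Real.rpow_add' hs0 (by linarith), Real.rpow_two]
        ring
    _ = ∫⁻ x in A, ENNReal.ofReal (r ^ a * (s / 2)) ∂circleMeasure := by
        rw [setLIntegral_const]
    _ ≤ _ := setLIntegral_mono' hAm inner
end

section
/- For every a ≥ 0 there exists a constant c_a > 0 such that for every Lebesgue-measurable subset A ⊆ ℝ of finite measure, ∬_{A×A} |x − y|^a dx dy ≥ c_a·|A|^{a+2}, where |A| denotes the Lebesgue measure of A. -/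
open MeasureTheory
open scoped ENNReal

/-- For every `a ≥ 0` there is `c_a > 0` such that
`∬_{A×A} |x - y|^a dx dy ≥ c_a |A|^{a+2}` for every measurable `A ⊆ ℝ` of finite
Lebesgue measure. -/
theorem double_integral_lower_bound_real (a : ℝ) (ha : 0 ≤ a) :
    ∃ c : ℝ, 0 < c ∧
      ∀ A : Set ℝ, MeasurableSet A → volume A ≠ ⊤ →
        ENNReal.ofReal (c * (volume A).toReal ^ (a + 2)) ≤
          ∫⁻ q in A ×ˢ A, ENNReal.ofReal (|q.1 - q.2| ^ a)
            ∂((volume : Measure ℝ).prod volume) := by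
  refine ⟨(1 / 4 : ℝ) ^ a / 2, by positivity, ?_⟩
  intro A hA hfin
  set m := (volume A).toReal with hm
  have hM : volume A = ENNReal.ofReal m := (ENNReal.ofReal_toReal hfin).symm
  have hm0 : 0 ≤ m := ENNReal.toReal_nonneg
  rcases hm0.eq_or_lt with h0 | hpos
  · rw [← h0, Real.zero_rpow (by linarith)]
    simp
  have hmeas : Measurable (fun q : ℝ × ℝ => ENNReal.ofReal (|q.1 - q.2| ^ a)) := by
    have h1 : Measurable (fun q : ℝ × ℝ => |q.1 - q.2|) :=
      (continuous_fst.sub continuous_snd).abs.measurable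
    exact (h1.pow_const a).ennreal_ofReal
  rw [← Measure.prod_restrict, lintegral_prod _ hmeas.aemeasurable]
  have key : ∀ x : ℝ, ENNReal.ofReal ((m / 4) ^ a * (m / 2)) ≤
      ∫⁻ y in A, ENNReal.ofReal (|x - y| ^ a) := by
    intro x
    have hsub : A \ Metric.ball x (m / 4) ⊆ A := Set.diff_subset
    have hvol : ENNReal.ofReal (m / 2) ≤ volume (A \ Metric.ball x (m / 4)) := by
      have h := le_measure_diff (μ := (volume : Measure ℝ)) (s₁ := A) (s₂ := Metric.ball x (m / 4))
      rw [hM, Real.volume_ball, ← ENNReal.ofReal_sub _ (by positivity)] at h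
      convert h using 2
      ring
    calc ENNReal.ofReal ((m / 4) ^ a * (m / 2))
        = ENNReal.ofReal ((m / 4) ^ a) * ENNReal.ofReal (m / 2) :=
          ENNReal.ofReal_mul (by positivity)
      _ ≤ ENNReal.ofReal ((m / 4) ^ a) * volume (A \ Metric.ball x (m / 4)) := by gcongr
      _ = ∫⁻ _ in A \ Metric.ball x (m / 4), ENNReal.ofReal ((m / 4) ^ a) := by
          rw [setLIntegral_const]
      _ ≤ ∫⁻ y in A \ Metric.ball x (m / 4), ENNReal.ofReal (|x - y| ^ a) := by
          refine setLIntegral_mono' (hA.diff measurableSet_ball) fun y hy => ?_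
          apply ENNReal.ofReal_le_ofReal
          apply Real.rpow_le_rpow (by positivity) _ ha
          have h2 := hy.2
          rw [Metric.mem_ball, Real.dist_eq, not_lt, abs_sub_comm] at h2
          exact h2
      _ ≤ ∫⁻ y in A, ENNReal.ofReal (|x - y| ^ a) := lintegral_mono_set hsub
  calc ENNReal.ofReal ((1 / 4 : ℝ) ^ a / 2 * m ^ (a + 2))
      = ENNReal.ofReal ((m / 4) ^ a * (m / 2)) * volume A := by
        rw [hM, ← ENNReal.ofReal_mul (by positivity)]
        congr 1
        rw [show m / 4 = (1 / 4) * m by ring, Real.mul_rpow (by norm_num) hm0,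
          Real.rpow_add hpos, Real.rpow_two]
        ring
    _ = ∫⁻ _ in A, ENNReal.ofReal ((m / 4) ^ a * (m / 2)) := by rw [setLIntegral_const]
    _ ≤ _ := lintegral_mono fun x => key x
end
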